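/- Let (A,G,α) be a C*-dynamical system with G discrete and let F : G → CB(A) be a bounded function. The following are equivalent: (i) F is a completely positive Herz-Schur (A,G,α)-multiplier; (ii) the function N(F) : G×G → CB(A), N(F)(s,t)(a) = α_{s⁻¹}(F(st⁻¹)(α_s(a))), is of positive type; (iii) N(F) is a Schur A-multiplier and S_{N(F)} is completely positive. Moreover, if (i) holds then ||S_F||_cb = ||S_{N(F)}||_cb = ||F(e)||_cb. -/

import Mathlib

noncomputable section

open scoped ComplexOrder
open Matrix
open scoped ENNReal

/-- Positivity of a matrix over a (possibly non-unital) C*-algebra: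
`M` is positive iff it factors as `Nᴴ * N`. -/
def MatPos {R : Type*} [NonUnitalSemiring R] [StarRing R] {ν : Type*} [Fintype ν]
    (M : Matrix ν ν R) : Prop :=
  ∃ N : Matrix ν ν R, M = Nᴴ * N

/-- A linear map between C*-algebras is completely positive if all its matrix
amplifications preserve positivity. -/
def IsCompletelyPositive {R S : Type*} [NonUnitalSemiring R] [StarRing R] [Module ℂ R]
    [NonUnitalSemiring S] [StarRing S] [Module ℂ S] (Φ : R →ₗ[ℂ] S) : Prop :=
  ∀ (n : ℕ) (M : Matrix (Fin n) (Fin n) R), MatPos M → MatPos (M.map Φ)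

variable {H : Type*} [NormedAddCommGroup H] [InnerProductSpace ℂ H] [CompleteSpace H]

/-- The bounded operator on the Hilbert space `H ⊕₂ ⋯ ⊕₂ H` associated to an
operator-valued `n × n` matrix. -/
def matOp {ν : Type*} [Fintype ν] (M : Matrix ν ν (H →L[ℂ] H)) :
    PiLp 2 (fun _ : ν => H) →L[ℂ] PiLp 2 (fun _ : ν => H) :=
  ((PiLp.continuousLinearEquiv 2 ℂ (fun _ : ν => H)).symm :
      (∀ _ : ν, H) →L[ℂ] PiLp 2 (fun _ : ν => H)) ∘L
    (ContinuousLinearMap.pi fun i =>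
      (∑ j, (M i j) ∘L (ContinuousLinearMap.proj j)) ∘L
        ((PiLp.continuousLinearEquiv 2 ℂ (fun _ : ν => H)) :
          PiLp 2 (fun _ : ν => H) →L[ℂ] ∀ _ : ν, H))

variable {H : Type*} [NormedAddCommGroup H] [InnerProductSpace ℂ H] [CompleteSpace H]
variable {X : Type*}

/-- Evaluation at a point, as a continuous linear map `ℓ²(X,H) → H`. -/
def lpEval (x : X) : lp (fun _ : X => H) 2 →L[ℂ] H :=
  LinearMap.mkContinuous
    { toFun := fun f => f x
      map_add' := fun f g => by
        have := lp.coeFn_add f g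
        exact congrFun this x
      map_smul' := fun c f => by
        have := lp.coeFn_smul c f
        exact congrFun this x }
    1 (fun f => by
      simpa using lp.norm_apply_le_norm (by norm_num) f x)

/-- Inclusion of the `x`-th coordinate, as a continuous linear map `H → ℓ²(X,H)`. -/
def lpSingle (x : X) : H →L[ℂ] lp (fun _ : X => H) 2 := by
  classical
  exact LinearMap.mkContinuous
    { toFun := fun ξ => lp.single 2 x ξ
      map_add' := fun ξ η => by
        apply lp.ext
        funext j
        by_cases h : j = x
        · subst h; simp [lp.single_apply_self]
        · simp [lp.single_apply_ne _ _ _ h, lp.coeFn_add]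
      map_smul' := fun c ξ => by simp [lp.single_smul] }
    1 (fun ξ => by
      simpa using (lp.norm_single (p := 2) (by norm_num)
        (fun _ : X => ξ) x).le)

/-- The elementary operator `e_{x,y} ⊗ T` on `ℓ²(X,H)`. -/
def elemOp (x y : X) (T : H →L[ℂ] H) :
    lp (fun _ : X => H) 2 →L[ℂ] lp (fun _ : X => H) 2 :=
  (lpSingle x) ∘L T ∘L (lpEval y)

/-- The operator `T_k` on `ℓ²(X,H)` associated with a finitely supported kernel
`k : X × X → B(H)`; it is (defined to be) `0` if `k` is not finitely supported. -/
def TOp (k : X × X → (H →L[ℂ] H)) :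
    lp (fun _ : X => H) 2 →L[ℂ] lp (fun _ : X => H) 2 :=
  ∑ᶠ (p : X × X), elemOp p.1 p.2 (k p)

variable {G : Type*} [Group G]

/-- The left regular translation `λ_t` on `ℓ²(G,H)`. -/
def lam (t : G) : lp (fun _ : G => H) 2 →L[ℂ] lp (fun _ : G => H) 2 :=
  LinearMap.mkContinuous
    { toFun := fun f =>
        ⟨fun s => f (t⁻¹ * s), by
          apply memℓp_gen
          have hf : Summable fun s => ‖f s‖ ^ (2 : ℝ≥0∞).toReal :=
            (lp.memℓp f).summable (by norm_num)
          exact ((Equiv.mulLeft t⁻¹).summable_iff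
            (f := fun s => ‖f s‖ ^ (2 : ℝ≥0∞).toReal)).2 hf⟩
      map_add' := fun f g => by
        apply lp.ext; funext s
        exact congrFun (lp.coeFn_add f g) (t⁻¹ * s)
      map_smul' := fun c f => by
        apply lp.ext; funext s
        exact congrFun (lp.coeFn_smul c f) (t⁻¹ * s) }
    1 (fun f => by
      rw [one_mul]
      refine lp.norm_le_of_tsum_le (by norm_num) (norm_nonneg f) ?_
      have h1 : ∑' (s : G), ‖f (t⁻¹ * s)‖ ^ (2 : ℝ≥0∞).toReal
          = ∑' (s : G), ‖f s‖ ^ (2 : ℝ≥0∞).toReal :=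
        (Equiv.mulLeft t⁻¹).tsum_eq (fun s => ‖f s‖ ^ (2 : ℝ≥0∞).toReal)
      show ∑' (s : G), ‖f (t⁻¹ * s)‖ ^ (2 : ℝ≥0∞).toReal ≤ ‖f‖ ^ (2 : ℝ≥0∞).toReal
      rw [h1, ← lp.norm_rpow_eq_tsum (by norm_num) f])

/-- The diagonal ("block multiplication") operator on `ℓ²(X,H)` associated with a
uniformly bounded family of operators. -/
def diagOp (T : X → (H →L[ℂ] H)) (C : ℝ) (hC : ∀ x, ‖T x‖ ≤ C) :
    lp (fun _ : X => H) 2 →L[ℂ] lp (fun _ : X => H) 2 := by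
  have hC' : ∀ x, ‖T x‖ ≤ max C 0 := fun x => (hC x).trans (le_max_left _ _)
  have hr : (0:ℝ) < (2 : ℝ≥0∞).toReal := by norm_num
  have key : ∀ (f : lp (fun _ : X => H) 2) (x : X),
      ‖T x (f x)‖ ^ (2 : ℝ≥0∞).toReal
        ≤ (max C 0) ^ (2 : ℝ≥0∞).toReal * ‖f x‖ ^ (2 : ℝ≥0∞).toReal := by
    intro f x
    have h1 : ‖T x (f x)‖ ≤ max C 0 * ‖f x‖ :=
      ((T x).le_opNorm (f x)).trans
        (mul_le_mul_of_nonneg_right (hC' x) (norm_nonneg _))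
    calc ‖T x (f x)‖ ^ (2 : ℝ≥0∞).toReal
        ≤ (max C 0 * ‖f x‖) ^ (2 : ℝ≥0∞).toReal :=
          Real.rpow_le_rpow (norm_nonneg _) h1 hr.le
      _ = (max C 0) ^ (2 : ℝ≥0∞).toReal * ‖f x‖ ^ (2 : ℝ≥0∞).toReal :=
          Real.mul_rpow (le_max_right _ _) (norm_nonneg _)
  have mem : ∀ f : lp (fun _ : X => H) 2, Memℓp (fun x => T x (f x)) 2 := by
    intro f
    apply memℓp_gen
    exact Summable.of_nonneg_of_le
      (fun x => Real.rpow_nonneg (norm_nonneg _) _) (key f)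
      (((lp.memℓp f).summable hr).mul_left _)
  exact LinearMap.mkContinuous
    { toFun := fun f => ⟨fun x => T x (f x), mem f⟩
      map_add' := fun f g => by
        apply lp.ext; funext x
        have := congrFun (lp.coeFn_add f g) x
        show T x ((f + g) x) = _
        rw [this]
        exact (T x).map_add (f x) (g x)
      map_smul' := fun c f => by
        apply lp.ext; funext x
        have := congrFun (lp.coeFn_smul c f) x
        show T x ((c • f) x) = _
        rw [this]
        simp [lp.coeFn_smul] }
    (max C 0) (fun f => by
      refine lp.norm_le_of_tsum_le hr (by positivity) ?_
      show ∑' (x : X), ‖T x (f x)‖ ^ (2 : ℝ≥0∞).toReal ≤ _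
      calc ∑' (x : X), ‖T x (f x)‖ ^ (2 : ℝ≥0∞).toReal
          ≤ ∑' (x : X), (max C 0) ^ (2 : ℝ≥0∞).toReal * ‖f x‖ ^ (2 : ℝ≥0∞).toReal :=
            Summable.tsum_le_tsum (key f)
              (Summable.of_nonneg_of_le
                (fun x => Real.rpow_nonneg (norm_nonneg _) _) (key f)
                (((lp.memℓp f).summable hr).mul_left _))
              (((lp.memℓp f).summable hr).mul_left _)
        _ = (max C 0) ^ (2 : ℝ≥0∞).toReal * ∑' (x : X), ‖f x‖ ^ (2 : ℝ≥0∞).toReal :=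
            tsum_mul_left
        _ = (max C 0) ^ (2 : ℝ≥0∞).toReal * ‖f‖ ^ (2 : ℝ≥0∞).toReal := by
            rw [lp.norm_rpow_eq_tsum hr]
        _ = (max C 0 * ‖f‖) ^ (2 : ℝ≥0∞).toReal :=
            (Real.mul_rpow (by positivity) (norm_nonneg _)).symm)

section CB

variable {A' B' : Type*} [AddCommMonoid A'] [Module ℂ A'] [AddCommMonoid B'] [Module ℂ B']
variable {K : Type*} [NormedAddCommGroup K] [InnerProductSpace ℂ K] [CompleteSpace K]

/-- All matrix amplifications of `Φ` are bounded by `C`, where matrices over the abstract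
spaces are normed through the given embeddings into concrete operator algebras. -/
def CBBound (ιA : A' → (H →L[ℂ] H)) (ιB : B' → (K →L[ℂ] K))
    (Φ : A' →ₗ[ℂ] B') (C : ℝ) : Prop :=
  ∀ (n : ℕ) (M : Matrix (Fin n) (Fin n) A'),
    ‖matOp (M.map (fun a => ιB (Φ a)))‖ ≤ C * ‖matOp (M.map ιA)‖

/-- Complete boundedness of a linear map, relative to embeddings of its domain and
codomain into concrete operator algebras. -/
def IsCB (ιA : A' → (H →L[ℂ] H)) (ιB : B' → (K →L[ℂ] K)) (Φ : A' →ₗ[ℂ] B') : Prop :=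
  ∃ C : ℝ, 0 ≤ C ∧ CBBound ιA ιB Φ C

/-- The completely bounded norm of a linear map, relative to embeddings of its domain
and codomain into concrete operator algebras. -/
def cbNorm (ιA : A' → (H →L[ℂ] H)) (ιB : B' → (K →L[ℂ] K)) (Φ : A' →ₗ[ℂ] B') : ℝ :=
  sInf { C : ℝ | 0 ≤ C ∧ CBBound ιA ιB Φ C }

end CB

section Schur

variable {A : Type*} [NonUnitalCStarAlgebra A]

/-- A *-representation is non-degenerate if the span of the vectors in its range is dense. -/
def NondegenerateRep {K : Type*} [NormedAddCommGroup K] [InnerProductSpace ℂ K]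
    [CompleteSpace K] (ρ : A →⋆ₙₐ[ℂ] (K →L[ℂ] K)) : Prop :=
  Dense (Submodule.span ℂ {ξ : K | ∃ (a : A) (v : K), ρ a v = ξ} : Set K)

/-- A function `φ : X × X → CB(A, B(H))` is of positive type if it maps positive
matrices to positive matrices, entrywise. -/
def PositiveType (φ : X → X → (A →ₗ[ℂ] (H →L[ℂ] H))) : Prop :=
  ∀ (m : ℕ) (x : Fin m → X) (a : Matrix (Fin m) (Fin m) A),
    MatPos a → MatPos (Matrix.of fun p q => φ (x p) (x q) (a p q))

/-- A kernel `k : X × X → A` is positive definite if all the matrices obtained by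
sampling it at finitely many points are positive. -/
def PosDefKernel (k : X × X → A) : Prop :=
  ∀ (n : ℕ) (x : Fin n → X), MatPos (Matrix.of fun i j => k (x i, x j))

/-- The operator `T_k` on `ℓ²(X,H)` of a kernel `k : X × X → A`, via the embedding
`ι : A → B(H)` (it is `0` unless `k` is finitely supported). -/
def TKer (ι : A →⋆ₙₐ[ℂ] (H →L[ℂ] H)) (k : X × X → A) :
    lp (fun _ : X => H) 2 →L[ℂ] lp (fun _ : X => H) 2 :=
  TOp (fun p => ι (k p))

/-- `C` is a complete bound for the Schur multiplication map `S_φ : T_k ↦ T_{φ·k}`,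
tested on (matrices of) finitely supported kernels, which span a dense subspace of
`K(ℓ²(X)) ⊗ A`. -/
def SchurBound (ι : A →⋆ₙₐ[ℂ] (H →L[ℂ] H)) (φ : X → X → (A →ₗ[ℂ] (H →L[ℂ] H)))
    (C : ℝ) : Prop :=
  ∀ (n : ℕ) (k : Fin n → Fin n → (X × X → A)),
    (∀ i j, (Function.support (k i j)).Finite) →
    ‖matOp (Matrix.of fun i j => TOp (fun p => φ p.1 p.2 (k i j p)))‖
      ≤ C * ‖matOp (Matrix.of fun i j => TKer ι (k i j))‖

/-- `φ` is a Schur `A`-multiplier: the map `S_φ : T_k ↦ T_{φ·k}` is completely bounded. -/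
def IsSchurMultiplier (ι : A →⋆ₙₐ[ℂ] (H →L[ℂ] H))
    (φ : X → X → (A →ₗ[ℂ] (H →L[ℂ] H))) : Prop :=
  ∃ C : ℝ, 0 ≤ C ∧ SchurBound ι φ C

/-- The multiplier norm `‖φ‖_m = ‖S_φ‖_cb` of a Schur `A`-multiplier. -/
def schurNorm (ι : A →⋆ₙₐ[ℂ] (H →L[ℂ] H))
    (φ : X → X → (A →ₗ[ℂ] (H →L[ℂ] H))) : ℝ :=
  sInf { C : ℝ | 0 ≤ C ∧ SchurBound ι φ C }

/-- Complete positivity of the map `S_φ : K(ℓ²(X)) ⊗ A → K(ℓ²(X)) ⊗ B(H)`, tested on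
(matrices of) finitely supported kernels. -/
def SchurCP (ι : A →⋆ₙₐ[ℂ] (H →L[ℂ] H)) (φ : X → X → (A →ₗ[ℂ] (H →L[ℂ] H))) : Prop :=
  ∀ (n : ℕ) (k : Fin n → Fin n → (X × X → A)),
    (∀ i j, (Function.support (k i j)).Finite) →
    MatPos (Matrix.of fun i j => TKer ι (k i j)) →
    MatPos (Matrix.of fun i j => TOp (fun p => φ p.1 p.2 (k i j p)))

end Schur

section Dynamics

variable {A : Type*} [NonUnitalCStarAlgebra A]

/-- `α` is an action of the group `G` on `A` by *-automorphisms. -/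
def IsAction (α : G → A ≃⋆ₐ[ℂ] A) : Prop :=
  (∀ a, α 1 a = a) ∧ ∀ s t : G, ∀ a : A, α (s * t) a = α s (α t a)

/-- A *-automorphism of `A`, as a `ℂ`-linear map. -/
def autLin (e : A ≃⋆ₐ[ℂ] A) : A →ₗ[ℂ] A :=
  { toFun := e
    map_add' := fun a b => map_add e a b
    map_smul' := fun c a => map_smul e c a }

/-- The representation `π` of `A` on `ℓ²(G,H)`: `(π(a)ξ)(s) = α_{s⁻¹}(a)(ξ(s))`. -/
def piRep (ι : A →⋆ₙₐ[ℂ] (H →L[ℂ] H)) (α : G → A ≃⋆ₐ[ℂ] A) (a : A) :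
    lp (fun _ : G => H) 2 →L[ℂ] lp (fun _ : G => H) 2 :=
  diagOp (fun s => ι (α s⁻¹ a)) ‖a‖ (fun s =>
    (NonUnitalStarAlgHom.norm_apply_le ι (α s⁻¹ a)).trans_eq
      (StarAlgEquiv.norm_map (α s⁻¹) a))

/-- The reduced crossed product `A ⋊_{α,r} G`, realised concretely on `ℓ²(G,H)` as the
norm closure of the linear span of the operators `π(a)λ_t`. -/
def CrossedSet (ι : A →⋆ₙₐ[ℂ] (H →L[ℂ] H)) (α : G → A ≃⋆ₐ[ℂ] A) :
    Set (lp (fun _ : G => H) 2 →L[ℂ] lp (fun _ : G => H) 2) :=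
  closure (Submodule.span ℂ
    {x | ∃ (a : A) (t : G), x = piRep ι α a * lam t} : Set _)

/-- `E` is the canonical conditional expectation of the reduced crossed product onto `A`:
it is characterised by `ι (E x) = (x)_{e,e}`, the `(e,e)` matrix entry of `x`. -/
def IsCondExp (ι : A →⋆ₙₐ[ℂ] (H →L[ℂ] H)) (α : G → A ≃⋆ₐ[ℂ] A)
    (E : (lp (fun _ : G => H) 2 →L[ℂ] lp (fun _ : G => H) 2) →ₗ[ℂ] A) : Prop :=
  ∀ x ∈ CrossedSet ι α, ι (E x) = (lpEval (1 : G)) ∘L x ∘L (lpSingle (1 : G))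

/-- The defining property of the map `S_F` associated with `F : G → CB(A)`:
`S_F(π(a)λ_s) = π(F(s)(a))λ_s`. -/
def HSGenProp (ι : A →⋆ₙₐ[ℂ] (H →L[ℂ] H)) (α : G → A ≃⋆ₐ[ℂ] A)
    (F : G → (A →ₗ[ℂ] A))
    (Φ : (lp (fun _ : G => H) 2 →L[ℂ] lp (fun _ : G => H) 2) →ₗ[ℂ]
         (lp (fun _ : G => H) 2 →L[ℂ] lp (fun _ : G => H) 2)) : Prop :=
  ∀ (a : A) (s : G), Φ (piRep ι α a * lam s) = piRep ι α (F s a) * lam s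

/-- `Φ` maps the reduced crossed product into itself and, on matrices over the reduced
crossed product, all amplifications of `Φ` are bounded by `C`. -/
def CBBoundOnCrossed (ι : A →⋆ₙₐ[ℂ] (H →L[ℂ] H)) (α : G → A ≃⋆ₐ[ℂ] A)
    (Φ : (lp (fun _ : G => H) 2 →L[ℂ] lp (fun _ : G => H) 2) →ₗ[ℂ]
         (lp (fun _ : G => H) 2 →L[ℂ] lp (fun _ : G => H) 2)) (C : ℝ) : Prop :=
  ∀ (n : ℕ) (M : Matrix (Fin n) (Fin n)
      (lp (fun _ : G => H) 2 →L[ℂ] lp (fun _ : G => H) 2)),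
    (∀ i j, M i j ∈ CrossedSet ι α) →
      ‖matOp (M.map Φ)‖ ≤ C * ‖matOp M‖

/-- `Φ` is completely positive on the reduced crossed product: matrices over the crossed
product which are positive are mapped to positive matrices. -/
def CPOnCrossed (ι : A →⋆ₙₐ[ℂ] (H →L[ℂ] H)) (α : G → A ≃⋆ₐ[ℂ] A)
    (Φ : (lp (fun _ : G => H) 2 →L[ℂ] lp (fun _ : G => H) 2) →ₗ[ℂ]
         (lp (fun _ : G => H) 2 →L[ℂ] lp (fun _ : G => H) 2)) : Prop :=
  (∀ x ∈ CrossedSet ι α, Φ x ∈ CrossedSet ι α) ∧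
  ∀ (n : ℕ) (M : Matrix (Fin n) (Fin n)
      (lp (fun _ : G => H) 2 →L[ℂ] lp (fun _ : G => H) 2)),
    (∀ i j, M i j ∈ CrossedSet ι α) → MatPos M → MatPos (M.map Φ)

/-- `F : G → CB(A)` is a Herz-Schur `(A,G,α)`-multiplier: the map `S_F` determined by
`S_F(π(a)λ_s) = π(F(s)(a))λ_s` extends to a completely bounded map on `A ⋊_{α,r} G`. -/
def IsHerzSchurMultiplier (ι : A →⋆ₙₐ[ℂ] (H →L[ℂ] H)) (α : G → A ≃⋆ₐ[ℂ] A)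
    (F : G → (A →ₗ[ℂ] A)) : Prop :=
  ∃ Φ, HSGenProp ι α F Φ ∧ (∀ x ∈ CrossedSet ι α, Φ x ∈ CrossedSet ι α) ∧
    ∃ C : ℝ, 0 ≤ C ∧ CBBoundOnCrossed ι α Φ C

/-- `F : G → CB(A)` is a completely positive Herz-Schur `(A,G,α)`-multiplier: the map
`S_F` extends to a completely positive (hence completely bounded) map on `A ⋊_{α,r} G`. -/
def IsHerzSchurMultiplierCP (ι : A →⋆ₙₐ[ℂ] (H →L[ℂ] H)) (α : G → A ≃⋆ₐ[ℂ] A)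
    (F : G → (A →ₗ[ℂ] A)) : Prop :=
  ∃ Φ, HSGenProp ι α F Φ ∧ CPOnCrossed ι α Φ ∧
    ∃ C : ℝ, 0 ≤ C ∧ CBBoundOnCrossed ι α Φ C

/-- The function `N(F) : G × G → CB(A)`, `N(F)(s,t)(a) = α_{s⁻¹}(F(st⁻¹)(α_s(a)))`. -/
def NF (α : G → A ≃⋆ₐ[ℂ] A) (F : G → (A →ₗ[ℂ] A)) : G → G → (A →ₗ[ℂ] A) :=
  fun s t => (autLin (α s⁻¹)) ∘ₗ (F (s * t⁻¹)) ∘ₗ (autLin (α s))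

end Dynamics

section Trace

variable {A : Type*} [NonUnitalCStarAlgebra A]

/-- `τ` is a positive linear functional. -/
def IsPositiveFunctional (τ : A →ₗ[ℂ] ℂ) : Prop :=
  ∀ a : A, 0 ≤ τ (star a * a)

/-- `τ` is tracial. -/
def IsTracial (τ : A →ₗ[ℂ] ℂ) : Prop :=
  ∀ a b : A, τ (a * b) = τ (b * a)

/-- `τ` is faithful. -/
def IsFaithfulFunctional (τ : A →ₗ[ℂ] ℂ) : Prop :=
  ∀ a : A, τ (star a * a) = 0 → a = 0

/-- The `L²`-norm `‖a‖_{2,τ} = τ(a*a)^{1/2}` associated with a positive functional `τ`. -/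
def l2norm (τ : A →ₗ[ℂ] ℂ) (a : A) : ℝ :=
  Real.sqrt (τ (star a * a)).re

/-- A map `Φ : A → A` is `L²`-bounded by `C` with respect to `τ`. -/
def L2BoundedBy (τ : A →ₗ[ℂ] ℂ) (Φ : A →ₗ[ℂ] A) (C : ℝ) : Prop :=
  ∀ a : A, l2norm τ (Φ a) ≤ C * l2norm τ a

/-- A map `Φ : A → A` is `L²`-bounded with respect to `τ`, i.e. it extends to a bounded
operator `T_Φ` on `L²(A,τ)`. -/
def L2Bounded (τ : A →ₗ[ℂ] ℂ) (Φ : A →ₗ[ℂ] A) : Prop :=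
  ∃ C : ℝ, 0 ≤ C ∧ L2BoundedBy τ Φ C

/-- The norm of the extension `T_Φ` of `Φ` to `L²(A,τ)`. -/
def l2OpNorm (τ : A →ₗ[ℂ] ℂ) (Φ : A →ₗ[ℂ] A) : ℝ :=
  sInf { C : ℝ | 0 ≤ C ∧ L2BoundedBy τ Φ C }

/-- `Φ` is `L²`-compact with respect to `τ`: the image under `Φ` of the `L²`-unit ball of
`A` is totally bounded in the `L²`-norm; equivalently, the extension `T_Φ` of `Φ` to
`L²(A,τ)` is a compact operator. -/
def L2Compact (τ : A →ₗ[ℂ] ℂ) (Φ : A →ₗ[ℂ] A) : Prop :=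
  ∀ ε : ℝ, 0 < ε → ∃ S : Finset A, ∀ a : A, l2norm τ a ≤ 1 →
    ∃ b ∈ S, l2norm τ (Φ a - b) < ε

end Trace

section Props

variable {A : Type*} [CStarAlgebra A]

/-- The pair `(A,τ)` has the C*-algebra Haagerup property (Definition 3.1, Dong). -/
def CStarHaagerup (τ : A →ₗ[ℂ] ℂ) : Prop :=
  ∃ (I : Type) (_ : Nonempty I) (_ : SemilatticeSup I) (Φ : I → (A →ₗ[ℂ] A)),
    (∀ i, Φ i 1 = 1) ∧
    (∀ i, IsCompletelyPositive (Φ i)) ∧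
    (∀ i (a : A), τ (Φ i (star a * a)) ≤ τ (star a * a)) ∧
    (∀ i, L2Compact τ (Φ i)) ∧
    (∀ a : A, Filter.Tendsto (fun i => l2norm τ (Φ i a - a)) Filter.atTop (nhds 0))

/-- `A` is a nuclear C*-algebra: there is a net of finite-rank completely positive
contractions converging to the identity in the point-norm topology. -/
def NuclearCStarAlgebra (A : Type*) [NonUnitalCStarAlgebra A] : Prop :=
  ∃ (I : Type) (_ : Nonempty I) (_ : SemilatticeSup I) (Φ : I → (A →ₗ[ℂ] A)),
    (∀ i, IsCompletelyPositive (Φ i)) ∧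
    (∀ i (a : A), ‖Φ i a‖ ≤ ‖a‖) ∧
    (∀ i, FiniteDimensional ℂ (LinearMap.range (Φ i))) ∧
    (∀ a : A, Filter.Tendsto (fun i => ‖Φ i a - a‖) Filter.atTop (nhds 0))

/-- A discrete group `G` has the Haagerup property: there is a net of normalised
positive-definite functions on `G`, vanishing at infinity, converging pointwise to `1`. -/
def GroupHaagerup (G : Type*) [Group G] : Prop :=
  ∃ (I : Type) (_ : Nonempty I) (_ : SemilatticeSup I) (φ : I → G → ℂ),
    (∀ i, φ i 1 = 1) ∧
    (∀ i (n : ℕ) (s : Fin n → G) (μ : Fin n → ℂ),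
      0 ≤ ∑ k, ∑ l, (starRingEnd ℂ) (μ k) * φ i ((s k)⁻¹ * s l) * μ l) ∧
    (∀ i, ∀ ε : ℝ, 0 < ε → ∃ S : Finset G, ∀ s ∉ S, ‖φ i s‖ ≤ ε) ∧
    (∀ s : G, Filter.Tendsto (fun i => φ i s) Filter.atTop (nhds 1))

end Props

section More

variable {A : Type*} [NonUnitalCStarAlgebra A]

/-- A star homomorphism, as a `ℂ`-linear map. -/
def iotaLin {B : Type*} [NonUnitalCStarAlgebra B] (ι : A →⋆ₙₐ[ℂ] B) : A →ₗ[ℂ] B :=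
  { toFun := ι
    map_add' := fun a b => map_add ι a b
    map_smul' := fun c a => map_smul ι c a }

/-- A function `φ : X × X → CB(A)` with values in the maps on `A` is of positive type. -/
def PositiveTypeA (φ : X → X → (A →ₗ[ℂ] A)) : Prop :=
  ∀ (m : ℕ) (x : Fin m → X) (a : Matrix (Fin m) (Fin m) A),
    MatPos a → MatPos (Matrix.of fun p q => φ (x p) (x q) (a p q))

/-- The representation `π` of `A` on `ℓ²(G,H)`, as a linear map. -/
def piRepLin (ι : A →⋆ₙₐ[ℂ] (H →L[ℂ] H)) (α : G → A ≃⋆ₐ[ℂ] A) :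
    A →ₗ[ℂ] (lp (fun _ : G => H) 2 →L[ℂ] lp (fun _ : G => H) 2) :=
  { toFun := piRep ι α
    map_add' := fun a b => by
      apply ContinuousLinearMap.ext; intro f
      apply lp.ext; funext s
      have h1 : (((piRep ι α a + piRep ι α b) f :
          lp (fun _ : G => H) 2) : ∀ _ : G, H) s
          = ((piRep ι α a f : ∀ _ : G, H) s) + ((piRep ι α b f : ∀ _ : G, H) s) := by
        rw [ContinuousLinearMap.add_apply]
        exact congrFun (lp.coeFn_add (piRep ι α a f) (piRep ι α b f)) s
      show ι (α s⁻¹ (a + b)) (f s) = _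
      rw [h1]
      show _ = ι (α s⁻¹ a) (f s) + ι (α s⁻¹ b) (f s)
      rw [map_add (α s⁻¹), map_add ι, ContinuousLinearMap.add_apply]
    map_smul' := fun c a => by
      apply ContinuousLinearMap.ext; intro f
      apply lp.ext; funext s
      have h1 : (((c • piRep ι α a) f :
          lp (fun _ : G => H) 2) : ∀ _ : G, H) s
          = c • ((piRep ι α a f : ∀ _ : G, H) s) := by
        rw [ContinuousLinearMap.smul_apply]
        exact congrFun (lp.coeFn_smul c (piRep ι α a f)) s
      show ι (α s⁻¹ (c • a)) (f s) = _
      rw [RingHom.id_apply, h1]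
      show _ = c • ι (α s⁻¹ a) (f s)
      rw [map_smul (α s⁻¹), map_smul ι, ContinuousLinearMap.smul_apply] }

/-- The completely bounded norm of a map defined on the reduced crossed product. -/
def cbNormOnCrossed (ι : A →⋆ₙₐ[ℂ] (H →L[ℂ] H)) (α : G → A ≃⋆ₐ[ℂ] A)
    (Φ : (lp (fun _ : G => H) 2 →L[ℂ] lp (fun _ : G => H) 2) →ₗ[ℂ]
         (lp (fun _ : G => H) 2 →L[ℂ] lp (fun _ : G => H) 2)) : ℝ :=
  sInf { C : ℝ | 0 ≤ C ∧ CBBoundOnCrossed ι α Φ C }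

/-- The `L²`-norm `‖x‖_{2,τ'}` on the reduced crossed product induced by the trace
`τ' = τ ∘ E`. -/
def l2normCr (τ : A →ₗ[ℂ] ℂ)
    (E : (lp (fun _ : G => H) 2 →L[ℂ] lp (fun _ : G => H) 2) →ₗ[ℂ] A)
    (x : lp (fun _ : G => H) 2 →L[ℂ] lp (fun _ : G => H) 2) : ℝ :=
  Real.sqrt (τ (E (star x * x))).re

/-- The map `h_Φ : G → CB(A)` associated with a map `Φ` on the reduced crossed product:
`h_Φ(s)(a) = E(Φ(π(a)λ_s)λ_s*)`. -/
def hMap (ι : A →⋆ₙₐ[ℂ] (H →L[ℂ] H)) (α : G → A ≃⋆ₐ[ℂ] A)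
    (E : (lp (fun _ : G => H) 2 →L[ℂ] lp (fun _ : G => H) 2) →ₗ[ℂ] A)
    (Φ : (lp (fun _ : G => H) 2 →L[ℂ] lp (fun _ : G => H) 2) →ₗ[ℂ]
         (lp (fun _ : G => H) 2 →L[ℂ] lp (fun _ : G => H) 2))
    (s : G) : A →ₗ[ℂ] A :=
  E ∘ₗ (LinearMap.mulRight ℂ (star (lam s))) ∘ₗ Φ ∘ₗ
    (LinearMap.mulRight ℂ (lam (H := H) s)) ∘ₗ piRepLin ι α

end More

section BigProps

open Filter

variable {A : Type*} [CStarAlgebra A]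

/-- The Haagerup property for the `C*`-dynamical system `(A,G,α,τ)` (Definition 3.3). -/
def DynHaagerup (ι : A →⋆ₙₐ[ℂ] (H →L[ℂ] H)) (α : G → A ≃⋆ₐ[ℂ] A)
    (τ : A →ₗ[ℂ] ℂ) : Prop :=
  ∃ (I : Type) (_ : Nonempty I) (_ : SemilatticeSup I) (F : I → G → (A →ₗ[ℂ] A)),
    (∀ i, IsHerzSchurMultiplierCP ι α (F i)) ∧
    (∀ i, F i 1 1 = 1) ∧
    (∀ i (a : A), τ (F i 1 (star a * a)) ≤ τ (star a * a)) ∧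
    (∀ i (t : G), L2Compact τ (F i t)) ∧
    (∀ i, ∀ ε : ℝ, 0 < ε → ∃ S : Finset G, ∀ s ∉ S, l2OpNorm τ (F i s) ≤ ε) ∧
    (∀ (t : G) (a : A),
      Tendsto (fun i => l2norm τ (F i t a - a)) atTop (nhds 0))

/-- The C*-algebra Haagerup property for the reduced crossed product `A ⋊_{α,r} G`
endowed with the induced trace `τ' = τ ∘ E` (Definition 3.1). -/
def CrossedCStarHaagerup (ι : A →⋆ₙₐ[ℂ] (H →L[ℂ] H)) (α : G → A ≃⋆ₐ[ℂ] A)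
    (τ : A →ₗ[ℂ] ℂ)
    (E : (lp (fun _ : G => H) 2 →L[ℂ] lp (fun _ : G => H) 2) →ₗ[ℂ] A) : Prop :=
  ∃ (I : Type) (_ : Nonempty I) (_ : SemilatticeSup I)
    (Φ : I → ((lp (fun _ : G => H) 2 →L[ℂ] lp (fun _ : G => H) 2) →ₗ[ℂ]
              (lp (fun _ : G => H) 2 →L[ℂ] lp (fun _ : G => H) 2))),
    (∀ i, Φ i 1 = 1) ∧
    (∀ i, CPOnCrossed ι α (Φ i)) ∧
    (∀ i, ∀ x ∈ CrossedSet ι α, τ (E (Φ i (star x * x))) ≤ τ (E (star x * x))) ∧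
    (∀ i, ∀ ε : ℝ, 0 < ε →
      ∃ S : Finset (lp (fun _ : G => H) 2 →L[ℂ] lp (fun _ : G => H) 2),
        ∀ x ∈ CrossedSet ι α, l2normCr τ E x ≤ 1 →
          ∃ b ∈ S, l2normCr τ E (Φ i x - b) < ε) ∧
    (∀ x ∈ CrossedSet ι α,
      Tendsto (fun i => l2normCr τ E (Φ i x - x)) atTop (nhds 0))

end BigProps

section Nuc

open Filter

variable {A : Type*} [NonUnitalCStarAlgebra A]

/-- Nuclearity of the reduced crossed product `A ⋊_{α,r} G`: there is a net of
finite-rank completely positive contractions on it converging to the identity in the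
point-norm topology. -/
def CrossedNuclear (ι : A →⋆ₙₐ[ℂ] (H →L[ℂ] H)) (α : G → A ≃⋆ₐ[ℂ] A) : Prop :=
  ∃ (I : Type) (_ : Nonempty I) (_ : SemilatticeSup I)
    (Φ : I → ((lp (fun _ : G => H) 2 →L[ℂ] lp (fun _ : G => H) 2) →ₗ[ℂ]
              (lp (fun _ : G => H) 2 →L[ℂ] lp (fun _ : G => H) 2))),
    (∀ i, CPOnCrossed ι α (Φ i)) ∧
    (∀ i, ∀ x ∈ CrossedSet ι α, ‖Φ i x‖ ≤ ‖x‖) ∧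
    (∀ i, FiniteDimensional ℂ
      (Submodule.span ℂ ((fun x => Φ i x) '' CrossedSet ι α))) ∧
    (∀ x ∈ CrossedSet ι α, Tendsto (fun i => ‖Φ i x - x‖) atTop (nhds 0))

/-- Nuclearity of the `C*`-dynamical system `(A,G,α)` (Definition 4.2): a net of
completely positive, finitely supported Herz-Schur multipliers, with `‖F_i(e)‖_cb ≤ 1`,
with finite-rank values, converging to the identity pointwise in norm. -/
def DynNuclear (ι : A →⋆ₙₐ[ℂ] (H →L[ℂ] H)) (α : G → A ≃⋆ₐ[ℂ] A) : Prop :=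
  ∃ (I : Type) (_ : Nonempty I) (_ : SemilatticeSup I) (F : I → G → (A →ₗ[ℂ] A)),
    (∀ i, IsHerzSchurMultiplierCP ι α (F i)) ∧
    (∀ i, (Function.support (F i)).Finite) ∧
    (∀ i, CBBound (fun a => ι a) (fun a => ι a) (F i 1) 1) ∧
    (∀ i (s : G), FiniteDimensional ℂ (LinearMap.range (F i s))) ∧
    (∀ (s : G) (a : A), Tendsto (fun i => ‖F i s a - a‖) atTop (nhds 0))

end Nuc

section Amen

open Filter

variable {A : Type*} [CStarAlgebra A]

/-- Amenability of the action `α` of a discrete group `G` on a unital C*-algebra `A`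
(Definition 4.5): a net of finitely supported functions `T_i : G → Z(A)⁺` with
`Σ_s T_i(s)² = 1` and `‖Σ_s (T_i(s) - α_t(T_i(t⁻¹s)))*(T_i(s) - α_t(T_i(t⁻¹s)))‖ → 0`. -/
def AmenableAction {G : Type*} [Group G] (α : G → A ≃⋆ₐ[ℂ] A) : Prop :=
  ∃ (I : Type) (_ : Nonempty I) (_ : SemilatticeSup I) (T : I → G → A),
    (∀ i, (Function.support (T i)).Finite) ∧
    (∀ i (s : G) (c : A), Commute (T i s) c) ∧
    (∀ i (s : G), ∃ b : A, T i s = star b * b) ∧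
    (∀ i, ∑ᶠ s : G, T i s * T i s = 1) ∧
    (∀ t : G, Tendsto (fun i =>
        ‖∑ᶠ s : G, star (T i s - α t (T i (t⁻¹ * s))) *
          (T i s - α t (T i (t⁻¹ * s)))‖) atTop (nhds 0))

end Amen

universe u v w

/-- Data for a Stinespring-type representation of an operator-valued function on
`X × X`: a Hilbert space `K`, a *-representation `ρ : A → B(K)` and
families of operators `V, W : X → B(H,K)`. -/
structure OpValuedRep (A : Type u) [NonUnitalCStarAlgebra A]
    (H : Type v) [NormedAddCommGroup H] [InnerProductSpace ℂ H] [CompleteSpace H]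
    (X : Type w) where
  /-- the Hilbert space of the representation -/
  K : Type (max u v w)
  [nacg : NormedAddCommGroup K]
  [ips : InnerProductSpace ℂ K]
  [cpl : CompleteSpace K]
  /-- the representation -/
  ρ : A →⋆ₙₐ[ℂ] (K →L[ℂ] K)
  /-- the left family of operators -/
  V : X → (H →L[ℂ] K)
  /-- the right family of operators -/
  W : X → (H →L[ℂ] K)

attribute [instance] OpValuedRep.nacg OpValuedRep.ips OpValuedRep.cpl

end

noncomputable section
open scoped ComplexOrder ENNReal InnerProductSpace
open Matrix

set_option linter.all false
set_option linter.style.haveILetI false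
set_option linter.unusedSimpArgs false
set_option linter.unusedSectionVars false

namespace HS

section Mat
variable {H : Type*} [NormedAddCommGroup H] [InnerProductSpace ℂ H] [CompleteSpace H]
variable {A : Type*} [NonUnitalCStarAlgebra A]
variable {ν : Type*} [Fintype ν]

/-- The sesquilinear form of an operator matrix. -/
def form (M : Matrix ν ν (H →L[ℂ] H)) (ξ η : ν → H) : ℂ :=
  ∑ i, ∑ j, ⟪ξ i, M i j (η j)⟫_ℂ

/-- Form positivity. -/
def QPos (M : Matrix ν ν (H →L[ℂ] H)) : Prop := ∀ ξ : ν → H, 0 ≤ form M ξ ξ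

theorem matOp_apply (M : Matrix ν ν (H →L[ℂ] H)) (ξ : PiLp 2 (fun _ : ν => H)) (i : ν) :
    matOp M ξ i = ∑ j, M i j (ξ j) := by
  simp [matOp]

theorem inner_matOp (M : Matrix ν ν (H →L[ℂ] H)) (ξ η : PiLp 2 (fun _ : ν => H)) :
    ⟪ξ, matOp M η⟫_ℂ = form M (fun i => ξ i) (fun i => η i) := by
  simp [form, PiLp.inner_apply, matOp_apply, inner_sum]

/-- The amplification of a representation. -/
def matHom (ι : A →⋆ₙₐ[ℂ] (H →L[ℂ] H)) :
    CStarMatrix ν ν A →⋆ₙₐ[ℂ] (PiLp 2 (fun _ : ν => H) →L[ℂ] PiLp 2 (fun _ : ν => H)) where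
  toFun M := matOp (Matrix.map (CStarMatrix.ofMatrix.symm M) ι)
  map_smul' c M := by
    ext ξ i
    simp [matOp_apply, Finset.smul_sum]
  map_zero' := by
    ext ξ i
    simp [matOp_apply]
  map_add' M N := by
    ext ξ i
    simp [matOp_apply, Finset.sum_add_distrib]
  map_mul' M N := by
    ext ξ i
    simp [matOp_apply, CStarMatrix.mul_apply, map_sum, Finset.sum_apply]
    rw [Finset.sum_comm]
  map_star' M := by
    rw [ContinuousLinearMap.star_eq_adjoint, ContinuousLinearMap.eq_adjoint_iff]
    intro ξ η
    simp only [PiLp.inner_apply, matOp_apply, inner_sum, sum_inner]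
    rw [Finset.sum_comm]
    refine Finset.sum_congr rfl fun i _ => Finset.sum_congr rfl fun j _ => ?_
    simp [CStarMatrix.star_apply, map_star, ContinuousLinearMap.star_eq_adjoint,
      ContinuousLinearMap.adjoint_inner_left]

theorem matHom_apply (ι : A →⋆ₙₐ[ℂ] (H →L[ℂ] H)) (M : CStarMatrix ν ν A) :
    matHom ι M = matOp (Matrix.map (CStarMatrix.ofMatrix.symm M) ι) := rfl

theorem matOp_injective : Function.Injective (matOp (H := H) (ν := ν)) := by
  classical
  intro M N h
  ext i j v
  have := congrArg (fun T => T (PiLp.single 2 j v) i) h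
  simpa [matOp_apply, Pi.single_apply, apply_ite, Finset.sum_ite_eq] using this

theorem matHom_injective (ι : A →⋆ₙₐ[ℂ] (H →L[ℂ] H)) (hι : Function.Injective ι) :
    Function.Injective (matHom (ν := ν) ι) := by
  intro M N h
  have := matOp_injective h
  ext i j
  exact hι (congrFun (congrFun this i) j)

theorem exists_of_map_nonneg {C D : Type*} [NonUnitalCStarAlgebra C] [NonUnitalCStarAlgebra D]
    [PartialOrder D] [StarOrderedRing D] (φ : C →⋆ₙₐ[ℂ] D) (hφ : Function.Injective φ)
    (x : C) (h : 0 ≤ φ x) : ∃ y, x = star y * y := by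
  letI := CStarAlgebra.spectralOrder C
  haveI := CStarAlgebra.spectralOrderedRing C
  have hsa : IsSelfAdjoint x := by
    have := IsSelfAdjoint.of_nonneg h
    apply hφ
    rw [map_star]; exact this
  have h2 : (φ x)⁻ = 0 := (CFC.negPart_eq_zero_iff _).2 h
  have hc : Continuous φ := (NonUnitalStarAlgHom.isometry φ hφ).continuous
  have h3 : φ x⁻ = 0 := by
    rw [← h2, CFC.negPart_def, CFC.negPart_def]
    exact NonUnitalStarAlgHomClass.map_cfcₙ (R := ℝ) (S := ℂ) φ _ _
      (by fun_prop) (by simp) hc hsa (hsa.map _)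
  have h4 : x⁻ = 0 := hφ (by rw [h3, map_zero])
  have h5 := (CFC.negPart_eq_zero_iff _).1 h4
  exact CStarAlgebra.nonneg_iff_eq_star_mul_self.1 h5

theorem matPos_iff (ι : A →⋆ₙₐ[ℂ] (H →L[ℂ] H)) (hι : Function.Injective ι)
    (M : Matrix ν ν A) : MatPos M ↔ QPos (M.map ι) := by
  letI := CStarAlgebra.spectralOrder A
  haveI := CStarAlgebra.spectralOrderedRing A
  letI := CStarAlgebra.spectralOrder (CStarMatrix ν ν A)
  haveI := CStarAlgebra.spectralOrderedRing (CStarMatrix ν ν A)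
  have h1 : QPos (M.map ι) ↔ 0 ≤ matHom ι (CStarMatrix.ofMatrix M) := by
    rw [ContinuousLinearMap.nonneg_iff_isPositive, ContinuousLinearMap.isPositive_iff_complex]
    constructor
    · intro h ξ
      have := h (fun i => ξ i)
      rw [← inner_matOp] at this
      have h2 := RCLike.nonneg_iff.1 this
      rw [← inner_conj_symm, matHom_apply]
      rw [Equiv.symm_apply_apply]
      constructor
      · apply Complex.ext
        · simp
        · simpa [-inner_conj_symm] using h2.2
      · simpa [-inner_conj_symm] using h2.1
    · intro h ξ
      have h3 := h (WithLp.toLp 2 ξ)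
      rw [← inner_conj_symm, matHom_apply] at h3
      rw [Equiv.symm_apply_apply] at h3
      have := inner_matOp (M.map ι) (WithLp.toLp 2 ξ) (WithLp.toLp 2 ξ)
      change _ = form (M.map ι) ξ ξ at this
      rw [← this, RCLike.nonneg_iff]
      obtain ⟨h4, h5⟩ := h3
      refine ⟨by simpa [-inner_conj_symm] using h5, ?_⟩
      have := congrArg Complex.im h4
      simpa [-inner_conj_symm] using this.symm
  rw [h1]
  constructor
  · rintro ⟨N, rfl⟩
    have : CStarMatrix.ofMatrix (Nᴴ * N) = star (CStarMatrix.ofMatrix N) * CStarMatrix.ofMatrix N := rfl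
    rw [this, map_mul, map_star]
    exact star_mul_self_nonneg _
  · intro h
    obtain ⟨N, hN⟩ := exists_of_map_nonneg _ (matHom_injective ι hι) _ h
    exact ⟨CStarMatrix.ofMatrix.symm N, hN⟩

theorem norm_matOp_map (ι κ : A →⋆ₙₐ[ℂ] (H →L[ℂ] H)) (hι : Function.Injective ι)
    (hκ : Function.Injective κ)
    (M : Matrix ν ν A) : ‖matOp (M.map ι)‖ = ‖matOp (M.map κ)‖ := by
  letI := CStarAlgebra.spectralOrder A
  haveI := CStarAlgebra.spectralOrderedRing A
  have h1 := NonUnitalStarAlgHom.norm_map (matHom ι) (matHom_injective ι hι) (CStarMatrix.ofMatrix M)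
  have h2 := NonUnitalStarAlgHom.norm_map (matHom κ) (matHom_injective κ hκ) (CStarMatrix.ofMatrix M)
  exact h1.trans h2.symm

theorem matPos_op_iff (M : Matrix ν ν (H →L[ℂ] H)) : MatPos M ↔ QPos M :=
  matPos_iff (NonUnitalStarAlgHom.id ℂ (H →L[ℂ] H)) (fun _ _ h => h) M

theorem norm_matOp_le {M : Matrix ν ν (H →L[ℂ] H)} {K : ℝ} (hK : 0 ≤ K)
    (h : ∀ ξ η : ν → H, ‖form M ξ η‖ ≤ K * ‖WithLp.toLp 2 ξ‖ * ‖WithLp.toLp 2 η‖) :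
    ‖matOp M‖ ≤ K := by
  refine ContinuousLinearMap.opNorm_le_bound _ hK fun η => ?_
  have h1 := h (fun i => matOp M η i) (fun i => η i)
  rw [← inner_matOp] at h1
  change ‖⟪matOp M η, matOp M η⟫_ℂ‖ ≤ K * ‖matOp M η‖ * ‖η‖ at h1
  rw [inner_self_eq_norm_sq_to_K] at h1
  simp only [norm_pow, RCLike.norm_ofReal, abs_norm] at h1
  rcases (norm_nonneg (matOp M η)).eq_or_lt with h0 | h0
  · rw [← h0]; positivity
  · nlinarith

theorem norm_form_le (M : Matrix ν ν (H →L[ℂ] H)) (ξ η : ν → H) :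
    ‖form M ξ η‖ ≤ ‖matOp M‖ * ‖WithLp.toLp 2 ξ‖ * ‖WithLp.toLp 2 η‖ := by
  have := inner_matOp M (WithLp.toLp 2 ξ) (WithLp.toLp 2 η)
  change _ = form M ξ η at this
  rw [← this]
  refine (norm_inner_le_norm _ _).trans ?_
  have := (matOp M).le_opNorm (WithLp.toLp 2 η)
  nlinarith [norm_nonneg (WithLp.toLp 2 ξ)]

theorem norm_toLp_sq (ξ : ν → H) : ‖WithLp.toLp 2 ξ‖ ^ 2 = ∑ i, ‖ξ i‖ ^ 2 := by
  rw [PiLp.norm_sq_eq_of_L2]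

end Mat
end HS
end

noncomputable section
open scoped ComplexOrder ENNReal InnerProductSpace
open Matrix
set_option linter.all false
namespace HS

section Fin
variable {H : Type*} [NormedAddCommGroup H] [InnerProductSpace ℂ H] [CompleteSpace H]
variable {A : Type*} [NonUnitalCStarAlgebra A]
variable {ν : Type*} [Fintype ν] {X : Type*}

theorem MatPos.reindex {R : Type*} [NonUnitalSemiring R] [StarRing R] {μ : Type*} [Fintype μ]
    {M : Matrix ν ν R} (h : MatPos M) (e : μ ≃ ν) : MatPos (M.submatrix e e) := by
  obtain ⟨N, rfl⟩ := h
  refine ⟨N.submatrix e e, ?_⟩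
  rw [conjTranspose_submatrix, submatrix_mul_equiv]

theorem MatPos.herm {R : Type*} [NonUnitalSemiring R] [StarRing R]
    {M : Matrix ν ν R} (h : MatPos M) (i j : ν) : M i j = star (M j i) := by
  obtain ⟨N, rfl⟩ := h
  simp [Matrix.mul_apply, conjTranspose_apply, star_sum, star_mul]

theorem posType_fintype {φ : X → X → (A →ₗ[ℂ] A)} (h : PositiveTypeA φ) (x : ν → X)
    (a : Matrix ν ν A) (ha : MatPos a) :
    MatPos (Matrix.of fun p q => φ (x p) (x q) (a p q)) := by
  let e := Fintype.equivFin ν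
  have := h _ (fun i => x (e.symm i)) (a.submatrix e.symm e.symm) (MatPos.reindex ha _)
  have h2 := MatPos.reindex this e
  convert h2 using 1
  ext i j
  simp

theorem norm_matOp_le_of_re {B : Matrix ν ν (H →L[ℂ] H)} {K : ℝ} (hK : 0 ≤ K)
    (h : ∀ ξ η : ν → H, -2 * (form B ξ η).re ≤
      K * (‖WithLp.toLp 2 ξ‖ ^ 2 + ‖WithLp.toLp 2 η‖ ^ 2)) : ‖matOp B‖ ≤ K := by
  refine ContinuousLinearMap.opNorm_le_bound _ hK fun η => ?_
  rcases (norm_nonneg (matOp B η)).eq_or_lt with h0 | h0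
  · rw [← h0]; positivity
  set b := ‖matOp B η‖ with hb
  have h1 := h (fun i => ((-(‖η‖ / b) : ℝ) • matOp B η) i) (fun i => η i)
  rw [← inner_matOp] at h1
  change -2 * (⟪((-(‖η‖ / b) : ℝ) • matOp B η), matOp B η⟫_ℂ).re ≤
    K * (‖((-(‖η‖ / b) : ℝ) • matOp B η)‖ ^ 2 + ‖η‖ ^ 2) at h1
  rw [norm_smul, ← hb, ← Complex.coe_smul, inner_smul_left, inner_self_eq_norm_sq_to_K, ← hb] at h1
  have h2 : ((starRingEnd ℂ) (((-(‖η‖ / b) : ℝ)) : ℂ) * ((b : ℝ) : ℂ) ^ 2).re = -(‖η‖ / b) * b ^ 2 := by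
    rw [Complex.conj_ofReal, ← Complex.ofReal_pow, ← Complex.ofReal_mul, Complex.ofReal_re]
  change -2 * ((starRingEnd ℂ) (((-(‖η‖ / b) : ℝ)) : ℂ) * ((b : ℝ) : ℂ) ^ 2).re ≤ _ at h1
  rw [h2] at h1
  have h3 : ‖η‖ / b * b ^ 2 = ‖η‖ * b := by field_simp
  have h4 : ‖(-(‖η‖ / b) : ℝ)‖ * b = ‖η‖ := by
    rw [norm_neg, Real.norm_of_nonneg (by positivity)]; field_simp
  rw [h4] at h1
  have h5 : ‖η‖ * b ≤ K * ‖η‖ ^ 2 := by nlinarith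
  rcases (norm_nonneg η).eq_or_lt with h6 | h6
  · have : η = 0 := norm_eq_zero.1 h6.symm
    rw [hb, this]; simp
  · nlinarith

theorem form_diag [DecidableEq ν] (ι : A →⋆ₙₐ[ℂ] (H →L[ℂ] H)) (d : ν → A) (ξ η : ν → H) :
    form ((Matrix.diagonal d).map ι) ξ η = ∑ p, ⟪ξ p, ι (d p) (η p)⟫_ℂ := by
  refine Finset.sum_congr rfl fun p _ => ?_
  rw [Finset.sum_eq_single p]
  · simp
  · intro q _ hq
    simp [Matrix.diagonal_apply_ne' _ hq]
  · simp

theorem form_blocks (P Q R S : Matrix ν ν (H →L[ℂ] H)) (ζ : ν ⊕ ν → H) :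
    form (Matrix.fromBlocks P Q R S) ζ ζ =
      form P (ζ ∘ Sum.inl) (ζ ∘ Sum.inl) + form Q (ζ ∘ Sum.inl) (ζ ∘ Sum.inr)
      + form R (ζ ∘ Sum.inr) (ζ ∘ Sum.inl) + form S (ζ ∘ Sum.inr) (ζ ∘ Sum.inr) := by
  simp [form, Fintype.sum_sum_type, Finset.sum_add_distrib]
  ring

theorem form_star (B : Matrix ν ν (H →L[ℂ] H)) (ξ η : ν → H) :
    form Bᴴ ξ η = (starRingEnd ℂ) (form B η ξ) := by
  simp only [form, map_sum, inner_conj_symm, conjTranspose_apply,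
    ContinuousLinearMap.star_eq_adjoint, ContinuousLinearMap.adjoint_inner_right]
  rw [Finset.sum_comm]

theorem fin_step (ι : A →⋆ₙₐ[ℂ] (H →L[ℂ] H)) (hisom : ∀ a : A, ‖ι a‖ = ‖a‖)
    {φ : X → X → (A →ₗ[ℂ] A)} (hφ : PositiveTypeA φ) {C : ℝ} (hC0 : 0 ≤ C)
    (hC : ∀ s a, ‖φ s s a‖ ≤ C * ‖a‖) (x : ν → X) (a : Matrix ν ν A)
    (f : A) (hf : star f = f) (hf1 : ‖f‖ ≤ 1) :
    ‖matOp ((Matrix.of fun p q => φ (x p) (x q) (f * a p q * f)).map ι)‖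
      ≤ C * ‖matOp (a.map ι)‖ := by
  classical
  have hι : Function.Injective ι := by
    intro u v h
    rw [← sub_eq_zero, ← norm_eq_zero, ← hisom, map_sub, h, sub_self, norm_zero]
  set c := ‖matOp (a.map ι)‖ with hc
  have hc0 : 0 ≤ c := norm_nonneg _
  let D : Matrix ν ν A := Matrix.diagonal fun _ => (c : ℂ) • (f * f)
  let Q : Matrix ν ν A := Matrix.of fun p q => f * a p q * f
  let T : Matrix (ν ⊕ ν) (ν ⊕ ν) A := Matrix.fromBlocks D Q Qᴴ D
  have hff : ∀ v w : H, ⟪v, ι f w⟫_ℂ = ⟪ι f v, w⟫_ℂ := by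
    intro v w
    have : ι f = ContinuousLinearMap.adjoint (ι f) := by
      rw [← ContinuousLinearMap.star_eq_adjoint, ← map_star, hf]
    conv_lhs => rw [this]
    rw [ContinuousLinearMap.adjoint_inner_right]
  have hD : ∀ ξ : ν → H, form (D.map ι) ξ ξ = ((c * ‖WithLp.toLp 2 (fun p => ι f (ξ p))‖ ^ 2 : ℝ) : ℂ) := by
    intro ξ
    rw [form_diag, norm_toLp_sq]
    push_cast
    rw [Finset.mul_sum]
    refine Finset.sum_congr rfl fun p _ => ?_
    rw [map_smul, map_mul, _root_.smul_apply, inner_smul_right, ContinuousLinearMap.mul_apply, hff,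
      inner_self_eq_norm_sq_to_K]
    rfl
  have hQ : ∀ ξ η : ν → H, form (Q.map ι) ξ η = form (a.map ι) (fun p => ι f (ξ p)) (fun p => ι f (η p)) := by
    intro ξ η
    refine Finset.sum_congr rfl fun p _ => Finset.sum_congr rfl fun q _ => ?_
    simp only [Q, Matrix.map_apply, Matrix.of_apply, map_mul, ContinuousLinearMap.mul_apply, hff]
  have hTb : T.map ι = Matrix.fromBlocks (D.map ι) (Q.map ι) (Q.map ι)ᴴ (D.map ι) := by
    rw [Matrix.fromBlocks_map]
    congr 1
    ext i j : 2
    simp [map_star]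
  have hT : MatPos T := by
    rw [matPos_iff ι hι, hTb]
    intro ζ
    rw [form_blocks, hD, hD, form_star, hQ]
    have hb := norm_form_le (a.map ι) (fun p => ι f ((ζ ∘ Sum.inl) p)) (fun p => ι f ((ζ ∘ Sum.inr) p))
    rw [← hc] at hb
    set z := form (a.map ι) (fun p => ι f ((ζ ∘ Sum.inl) p)) (fun p => ι f ((ζ ∘ Sum.inr) p))
    have hz := Complex.abs_re_le_norm z
    have hz2 := neg_abs_le z.re
    set n1 := ‖WithLp.toLp 2 (fun p => ι f ((ζ ∘ Sum.inl) p))‖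
    set n2 := ‖WithLp.toLp 2 (fun p => ι f ((ζ ∘ Sum.inr) p))‖
    rw [Complex.nonneg_iff]
    constructor
    · simp only [Complex.add_re, Complex.ofReal_re, Complex.conj_re]
      nlinarith [mul_nonneg hc0 (sq_nonneg (n1 - n2))]
    · simp only [Complex.add_im, Complex.ofReal_im, Complex.conj_im]; ring
  have hP := posType_fintype hφ (Sum.elim x x) T hT
  let B : Matrix ν ν A := Matrix.of fun p q => φ (x p) (x q) (f * a p q * f)
  let E : Matrix ν ν A := Matrix.diagonal fun p => φ (x p) (x p) ((c : ℂ) • (f * f))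
  have hPb : (Matrix.of fun p q => φ (Sum.elim x x p) (Sum.elim x x q) (T p q)) =
      Matrix.fromBlocks E B Bᴴ E := by
    have hd : ∀ p q, φ (x p) (x q) (D p q) = E p q := by
      intro p q
      by_cases h : p = q
      · subst h; simp [D, E]
      · simp [D, E, h]
    ext (p | p) (q | q)
    · exact hd p q
    · rfl
    · exact MatPos.herm hP (Sum.inr p) (Sum.inl q)
    · exact hd p q
  rw [hPb, matPos_iff ι hι] at hP
  have hBs : Bᴴ.map ι = (B.map ι)ᴴ := by
    ext i j : 2
    simp [map_star]
  rw [Matrix.fromBlocks_map, hBs] at hP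
  apply norm_matOp_le_of_re (by positivity)
  intro ξ η
  have h1 := hP (Sum.elim ξ η)
  rw [form_blocks, form_star] at h1
  simp only [Sum.elim_comp_inl, Sum.elim_comp_inr] at h1
  have hE : ∀ ξ : ν → H, (form (E.map ι) ξ ξ).re ≤ C * c * ‖WithLp.toLp 2 ξ‖ ^ 2 := by
    intro ξ
    rw [form_diag, norm_toLp_sq, Complex.re_sum, Finset.mul_sum]
    refine Finset.sum_le_sum fun p _ => ?_
    refine (Complex.re_le_norm _).trans ((norm_inner_le_norm _ _).trans ?_)
    have h2 := (ι (φ (x p) (x p) ((c : ℂ) • (f * f)))).le_opNorm (ξ p)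
    have h3 : ‖ι (φ (x p) (x p) ((c : ℂ) • (f * f)))‖ ≤ C * c := by
      rw [hisom]
      refine (hC _ _).trans ?_
      rw [norm_smul, Complex.norm_real, Real.norm_of_nonneg hc0]
      have h4 : ‖f * f‖ ≤ 1 := (norm_mul_le _ _).trans (by nlinarith [norm_nonneg f])
      have : c * ‖f * f‖ ≤ c := by nlinarith
      exact mul_le_mul_of_nonneg_left this hC0
    have h5 := mul_le_mul_of_nonneg_right h3 (norm_nonneg (ξ p))
    nlinarith [norm_nonneg (ξ p)]
  have h2 := (Complex.nonneg_iff.1 h1).1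
  simp only [Complex.add_re, Complex.conj_re] at h2
  have h3 := hE ξ
  have h4 := hE η
  change -2 * (form (B.map ι) ξ η).re ≤ _
  linarith

theorem fin_bound (ι : A →⋆ₙₐ[ℂ] (H →L[ℂ] H)) (hisom : ∀ a : A, ‖ι a‖ = ‖a‖)
    {φ : X → X → (A →ₗ[ℂ] A)} (hφ : PositiveTypeA φ) {C : ℝ} (hC0 : 0 ≤ C)
    (hC : ∀ s a, ‖φ s s a‖ ≤ C * ‖a‖) (hcont : ∀ s t, Continuous (φ s t))
    (x : ν → X) (a : Matrix ν ν A) :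
    ‖matOp ((Matrix.of fun p q => φ (x p) (x q) (a p q)).map ι)‖
      ≤ C * ‖matOp (a.map ι)‖ := by
  letI := CStarAlgebra.spectralOrder A
  haveI := CStarAlgebra.spectralOrderedRing A
  have hl := CStarAlgebra.increasingApproximateUnit A
  have hιc : Continuous ι := (AddMonoidHomClass.isometry_of_norm ι hisom).continuous
  have hlim : ∀ b : A, Filter.Tendsto (fun f => f * b * f) (CStarAlgebra.approximateUnit A) (nhds b) := by
    intro b
    have h1 := hl.tendsto_mul_left b
    have h2 := hl.tendsto_mul_right b
    have h3 : Filter.Tendsto (fun f => f * (b * f - b)) (CStarAlgebra.approximateUnit A) (nhds 0) := by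
      refine squeeze_zero_norm' (a := fun f => ‖b * f - b‖) ?_ ?_
      · filter_upwards [hl.eventually_norm] with f hf
        refine (norm_mul_le _ _).trans ?_
        nlinarith [norm_nonneg (b * f - b)]
      · have := (h1.sub_const b).norm
        simpa using this
    have h4 := h3.add h2
    rw [zero_add] at h4
    refine h4.congr fun f => ?_
    simp only [mul_sub, mul_assoc]; abel
  refine norm_matOp_le (by positivity) fun ξ η => ?_
  refine le_of_tendsto (f := fun f => ‖form ((Matrix.of fun p q => φ (x p) (x q) (f * a p q * f)).map ι) ξ η‖)
    (x := CStarAlgebra.approximateUnit A) ?_ ?_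
  · refine Filter.Tendsto.norm ?_
    refine tendsto_finset_sum _ fun p _ => tendsto_finset_sum _ fun q _ => ?_
    have h1 := ((hιc.comp (hcont (x p) (x q))).tendsto (a p q)).comp (hlim (a p q))
    exact Filter.Tendsto.inner tendsto_const_nhds
      (((ContinuousLinearMap.apply ℂ H (η q)).continuous.tendsto _).comp h1)
  · filter_upwards [hl.eventually_norm, hl.eventually_star_eq] with f hf1 hf
    refine (norm_form_le _ ξ η).trans ?_
    have := fin_step ι hisom hφ hC0 hC x a f hf hf1
    gcongr

end Fin
end HS
end

noncomputable section
open scoped ComplexOrder ENNReal InnerProductSpace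
open Matrix
set_option linter.all false
namespace HS

section L2
variable {H : Type*} [NormedAddCommGroup H] [InnerProductSpace ℂ H] [CompleteSpace H]
variable {A : Type*} [NonUnitalCStarAlgebra A]
variable {ν : Type*} [Fintype ν] {X : Type*}

theorem lpEval_apply (x : X) (f : lp (fun _ : X => H) 2) : lpEval x f = f x := rfl

theorem lpSingle_self (x : X) (v : H) : (lpSingle x v : lp (fun _ : X => H) 2) x = v := by
  classical
  exact lp.single_apply_self _ _ _

theorem lpSingle_ne {x y : X} (h : y ≠ x) (v : H) : (lpSingle x v : lp (fun _ : X => H) 2) y = 0 := by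
  classical
  exact lp.single_apply_ne _ _ _ h

theorem inner_lpSingle (x : X) (v : H) (f : lp (fun _ : X => H) 2) :
    ⟪lpSingle x v, f⟫_ℂ = ⟪v, f x⟫_ℂ := by
  classical
  exact lp.inner_single_left (𝕜 := ℂ) x v f

/-- Matrix entries of an operator on `ℓ²`. -/
def entry (s r : X) (x : lp (fun _ : X => H) 2 →L[ℂ] lp (fun _ : X => H) 2) : H →L[ℂ] H :=
  lpEval s ∘L x ∘L lpSingle r

theorem entry_apply (s r : X) (x : lp (fun _ : X => H) 2 →L[ℂ] lp (fun _ : X => H) 2) (v : H) :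
    entry s r x v = x (lpSingle r v) s := rfl

/-- Vector assembled from finitely many coordinates. -/
def asm (E : Finset X) (v : ν × E → H) : ν → lp (fun _ : X => H) 2 :=
  fun i => ∑ s : E, lpSingle (s : X) (v (i, s))

theorem form_asm (E : Finset X) (M : Matrix ν ν (lp (fun _ : X => H) 2 →L[ℂ] lp (fun _ : X => H) 2))
    (v w : ν × E → H) :
    form M (asm E v) (asm E w) =
      form (Matrix.of fun p q : ν × E => entry (p.2 : X) (q.2 : X) (M p.1 q.1)) v w := by
  simp only [form, asm, Fintype.sum_prod_type, map_sum, sum_inner, inner_sum, inner_lpSingle,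
    Matrix.of_apply, entry_apply]
  refine Finset.sum_congr rfl fun i _ => ?_
  symm
  rw [Finset.sum_comm]
  refine Finset.sum_congr rfl fun j _ => ?_
  rw [Finset.sum_comm]

theorem norm_asm (E : Finset X) (v : ν × E → H) :
    ‖WithLp.toLp 2 (asm E v)‖ = ‖WithLp.toLp 2 v‖ := by
  rw [← sq_eq_sq₀ (norm_nonneg _) (norm_nonneg _), norm_toLp_sq, norm_toLp_sq,
    Fintype.sum_prod_type]
  refine Finset.sum_congr rfl fun i _ => ?_
  have h : ⟪asm E v i, asm E v i⟫_ℂ = ∑ s : E, ⟪v (i, s), v (i, s)⟫_ℂ := by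
    conv_lhs => rw [asm, sum_inner]
    refine Finset.sum_congr rfl fun s _ => ?_
    rw [inner_lpSingle]
    congr 1
    rw [← lpEval_apply, map_sum, Finset.sum_eq_single s]
    · rw [lpEval_apply, lpSingle_self]
    · intro r _ hr
      rw [lpEval_apply, lpSingle_ne]
      exact fun h => hr (Subtype.ext h.symm)
    · simp
  simp only [inner_self_eq_norm_sq_to_K] at h
  exact_mod_cast h

/-- Truncation. -/
theorem tendsto_asm (ξ : ν → lp (fun _ : X => H) 2) (i : ν) :
    Filter.Tendsto (fun E : Finset X => asm E (fun p => ξ p.1 (p.2 : X)) i) Filter.atTop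
      (nhds (ξ i)) := by
  classical
  have h := lp.hasSum_single (p := 2) (by norm_num) (ξ i)
  refine Filter.Tendsto.congr (fun E => ?_) h
  rw [asm]
  exact (Finset.sum_coe_sort E (fun s => lpSingle s (ξ i s))).symm

theorem tendsto_form_asm (M : Matrix ν ν (lp (fun _ : X => H) 2 →L[ℂ] lp (fun _ : X => H) 2))
    (ξ η : ν → lp (fun _ : X => H) 2) :
    Filter.Tendsto (fun E : Finset X => form M (asm E (fun p => ξ p.1 (p.2 : X)))
      (asm E (fun p => η p.1 (p.2 : X)))) Filter.atTop (nhds (form M ξ η)) := by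
  refine tendsto_finset_sum _ fun p _ => tendsto_finset_sum _ fun q _ => ?_
  exact (tendsto_asm ξ p).inner (((M p q).continuous.tendsto _).comp (tendsto_asm η q))

theorem tendsto_norm_asm (ξ : ν → lp (fun _ : X => H) 2) :
    Filter.Tendsto (fun E : Finset X => ‖WithLp.toLp 2 (asm E (fun p : ν × E => ξ p.1 (p.2 : X)))‖)
      Filter.atTop (nhds ‖WithLp.toLp 2 ξ‖) := by
  refine Filter.Tendsto.norm ?_
  refine ((PiLp.continuous_toLp 2 _).tendsto ξ).comp ?_
  exact tendsto_pi_nhds.2 fun i => tendsto_asm ξ i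

/-- The entrywise relation `y = S_φ x`. -/
def Rel (ι : A →⋆ₙₐ[ℂ] (H →L[ℂ] H)) (φ : X → X → (A →ₗ[ℂ] A))
    (x y : lp (fun _ : X => H) 2 →L[ℂ] lp (fun _ : X => H) 2) : Prop :=
  ∀ s r, ∃ a, entry s r x = ι a ∧ entry s r y = ι (φ s r a)

theorem rel_norm (ι : A →⋆ₙₐ[ℂ] (H →L[ℂ] H)) (hisom : ∀ a : A, ‖ι a‖ = ‖a‖)
    {φ : X → X → (A →ₗ[ℂ] A)} (hφ : PositiveTypeA φ) {C : ℝ} (hC0 : 0 ≤ C)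
    (hC : ∀ s a, ‖φ s s a‖ ≤ C * ‖a‖) (hcont : ∀ s t, Continuous (φ s t))
    {M Y : Matrix ν ν (lp (fun _ : X => H) 2 →L[ℂ] lp (fun _ : X => H) 2)}
    (h : ∀ i j, Rel ι φ (M i j) (Y i j)) : ‖matOp Y‖ ≤ C * ‖matOp M‖ := by
  refine norm_matOp_le (by positivity) fun ξ η => ?_
  refine le_of_tendsto_of_tendsto' (tendsto_form_asm Y ξ η).norm
    (((tendsto_norm_asm ξ).const_mul _).mul (tendsto_norm_asm η)) fun E => ?_
  choose b hb1 hb2 using h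
  let a : Matrix (ν × E) (ν × E) A := Matrix.of fun p q => b p.1 q.1 p.2 q.2
  have h1 : (Matrix.of fun p q : ν × E => entry (p.2 : X) (q.2 : X) (M p.1 q.1)) = a.map ι := by
    refine Matrix.ext fun p q => ?_
    exact hb1 _ _ _ _
  have h2 : (Matrix.of fun p q : ν × E => entry (p.2 : X) (q.2 : X) (Y p.1 q.1)) =
      (Matrix.of fun p q : ν × E => φ p.2 q.2 (a p q)).map ι := by
    refine Matrix.ext fun p q => ?_
    exact hb2 _ _ _ _
  have h3 : ‖matOp (a.map ι)‖ ≤ ‖matOp M‖ := by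
    refine norm_matOp_le (norm_nonneg _) fun v w => ?_
    rw [← h1, ← form_asm, ← norm_asm, ← norm_asm]
    exact norm_form_le M _ _
  rw [norm_asm, norm_asm, form_asm, h2]
  refine (norm_form_le _ _ _).trans ?_
  have h4 := fin_bound ι hisom hφ hC0 hC hcont (fun p : ν × E => (p.2 : X)) a
  gcongr
  exact h4.trans (by gcongr)

theorem rel_pos (ι : A →⋆ₙₐ[ℂ] (H →L[ℂ] H)) (hι : Function.Injective ι)
    {φ : X → X → (A →ₗ[ℂ] A)} (hφ : PositiveTypeA φ)
    {M Y : Matrix ν ν (lp (fun _ : X => H) 2 →L[ℂ] lp (fun _ : X => H) 2)}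
    (h : ∀ i j, Rel ι φ (M i j) (Y i j)) (hM : QPos M) : QPos Y := by
  intro ξ
  refine ge_of_tendsto' (tendsto_form_asm Y ξ ξ) fun E => ?_
  choose b hb1 hb2 using h
  let a : Matrix (ν × E) (ν × E) A := Matrix.of fun p q => b p.1 q.1 p.2 q.2
  have h1 : (Matrix.of fun p q : ν × E => entry (p.2 : X) (q.2 : X) (M p.1 q.1)) = a.map ι := by
    refine Matrix.ext fun p q => ?_
    exact hb1 _ _ _ _
  have h2 : (Matrix.of fun p q : ν × E => entry (p.2 : X) (q.2 : X) (Y p.1 q.1)) =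
      (Matrix.of fun p q : ν × E => φ p.2 q.2 (a p q)).map ι := by
    refine Matrix.ext fun p q => ?_
    exact hb2 _ _ _ _
  have h3 : MatPos a := by
    rw [matPos_iff ι hι, ← h1]
    intro v
    rw [← form_asm]
    exact hM _
  have h4 := posType_fintype hφ (fun p : ν × E => (p.2 : X)) a h3
  rw [matPos_iff ι hι] at h4
  rw [form_asm, h2]
  exact h4 _

theorem entry_TOp {k : X × X → (H →L[ℂ] H)} (hk : (Function.support k).Finite) (s r : X) :
    entry s r (TOp k) = k (s, r) := by
  classical
  have h : (Function.support fun p : X × X => elemOp p.1 p.2 (k p)) ⊆ (hk.toFinset : Set (X × X)) := by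
    intro p hp
    simp only [Set.Finite.coe_toFinset, Function.mem_support]
    intro h0
    apply hp
    simp [elemOp, h0]
  rw [TOp, finsum_eq_sum_of_support_subset _ h]
  ext v
  rw [entry_apply, _root_.sum_apply, ← lpEval_apply, map_sum]
  have h1 : ∀ p : X × X, p ≠ (s, r) → lpEval s (elemOp p.1 p.2 (k p) (lpSingle r v)) = 0 := by
    intro p hp
    change (lpSingle p.1 (k p ((lpSingle r v : lp (fun _ : X => H) 2) p.2)) : lp (fun _ : X => H) 2) s = 0
    by_cases hr : p.2 = r
    · rw [lpSingle_ne]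
      rintro rfl
      exact hp (Prod.ext rfl hr)
    · rw [lpSingle_ne hr]
      simp
  rw [Finset.sum_eq_single (s, r)]
  · change (lpSingle s (k (s, r) ((lpSingle r v : lp (fun _ : X => H) 2) r)) : lp (fun _ : X => H) 2) s = _
    rw [lpSingle_self, lpSingle_self]
  · intro p _ hp
    exact h1 p hp
  · intro hp
    simp only [Set.Finite.mem_toFinset, Function.mem_support, not_not] at hp
    rw [hp]; simp [elemOp]

theorem rel_TKer (ι : A →⋆ₙₐ[ℂ] (H →L[ℂ] H)) (φ : X → X → (A →ₗ[ℂ] A)) {k : X × X → A}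
    (hk : (Function.support k).Finite) :
    Rel ι φ (TKer ι k) (TOp fun p => (iotaLin ι ∘ₗ φ p.1 p.2) (k p)) := by
  intro s r
  refine ⟨k (s, r), ?_, ?_⟩
  · rw [TKer, entry_TOp]
    exact hk.subset fun p hp h0 => hp (by simp [h0])
  · rw [entry_TOp]
    · rfl
    · exact hk.subset fun p hp h0 => hp (by simp [h0])

end L2
end HS
end

noncomputable section
open scoped ComplexOrder ENNReal InnerProductSpace
open Matrix
set_option linter.all false
namespace HS

section Dyn
variable {H : Type*} [NormedAddCommGroup H] [InnerProductSpace ℂ H] [CompleteSpace H]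
variable {A : Type*} [NonUnitalCStarAlgebra A]
variable {G : Type*} [Group G]

theorem norm_matOp_map2 {ν : Type*} [Fintype ν] {K : Type*} [NormedAddCommGroup K]
    [InnerProductSpace ℂ K] [CompleteSpace K]
    (ι : A →⋆ₙₐ[ℂ] (H →L[ℂ] H)) (κ : A →⋆ₙₐ[ℂ] (K →L[ℂ] K)) (hι : Function.Injective ι)
    (hκ : Function.Injective κ)
    (M : Matrix ν ν A) : ‖matOp (M.map ι)‖ = ‖matOp (M.map κ)‖ := by
  letI := CStarAlgebra.spectralOrder A
  haveI := CStarAlgebra.spectralOrderedRing A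
  have h1 := NonUnitalStarAlgHom.norm_map (matHom ι) (matHom_injective ι hι) (CStarMatrix.ofMatrix M)
  have h2 := NonUnitalStarAlgHom.norm_map (matHom κ) (matHom_injective κ hκ) (CStarMatrix.ofMatrix M)
  rw [matHom_apply] at h1 h2
  exact h1.trans h2.symm

theorem piRep_apply (ι : A →⋆ₙₐ[ℂ] (H →L[ℂ] H)) (α : G → A ≃⋆ₐ[ℂ] A) (a : A)
    (f : lp (fun _ : G => H) 2) (s : G) : piRep ι α a f s = ι (α s⁻¹ a) (f s) := rfl

theorem lam_apply (t : G) (f : lp (fun _ : G => H) 2) (s : G) : lam t f s = f (t⁻¹ * s) := rfl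

theorem op_ext {x y : lp (fun _ : G => H) 2 →L[ℂ] lp (fun _ : G => H) 2}
    (h : ∀ f s, x f s = y f s) : x = y := by
  refine ContinuousLinearMap.ext fun f => ?_
  apply lp.ext
  funext s
  exact h f s

theorem lam_mul (s t : G) : (lam s * lam t : lp (fun _ : G => H) 2 →L[ℂ] lp (fun _ : G => H) 2)
    = lam (s * t) := by
  refine op_ext fun f r => ?_
  change f (t⁻¹ * (s⁻¹ * r)) = f ((s * t)⁻¹ * r)
  rw [_root_.mul_inv_rev, mul_assoc]

theorem lam_one : (lam (1 : G) : lp (fun _ : G => H) 2 →L[ℂ] lp (fun _ : G => H) 2) = 1 := by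
  refine op_ext fun f r => ?_
  change f (1⁻¹ * r) = f r
  rw [inv_one, one_mul]

theorem lam_inner (t : G) (f g : lp (fun _ : G => H) 2) :
    ⟪f, lam t g⟫_ℂ = ⟪lam t⁻¹ f, g⟫_ℂ := by
  rw [lp.inner_eq_tsum, lp.inner_eq_tsum, ← (Equiv.mulLeft t).tsum_eq]
  refine tsum_congr fun s => ?_
  change ⟪f (t * s), g (t⁻¹ * (t * s))⟫_ℂ = ⟪f ((t⁻¹)⁻¹ * s), g s⟫_ℂ
  rw [inv_inv, inv_mul_cancel_left]

theorem star_lam (t : G) :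
    star (lam t : lp (fun _ : G => H) 2 →L[ℂ] lp (fun _ : G => H) 2) = lam t⁻¹ := by
  rw [ContinuousLinearMap.star_eq_adjoint]
  symm
  rw [ContinuousLinearMap.eq_adjoint_iff]
  intro x y
  rw [lam_inner]

theorem star_piRep (ι : A →⋆ₙₐ[ℂ] (H →L[ℂ] H)) (α : G → A ≃⋆ₐ[ℂ] A) (a : A) :
    star (piRep ι α a) = piRep ι α (star a) := by
  rw [ContinuousLinearMap.star_eq_adjoint]
  symm
  rw [ContinuousLinearMap.eq_adjoint_iff]
  intro x y
  rw [lp.inner_eq_tsum, lp.inner_eq_tsum]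
  refine tsum_congr fun s => ?_
  rw [piRep_apply, piRep_apply, map_star, map_star, ContinuousLinearMap.star_eq_adjoint,
    ContinuousLinearMap.adjoint_inner_left]

theorem piRep_mul (ι : A →⋆ₙₐ[ℂ] (H →L[ℂ] H)) (α : G → A ≃⋆ₐ[ℂ] A) (a b : A) :
    piRep ι α (a * b) = piRep ι α a * piRep ι α b := by
  refine op_ext fun f s => ?_
  change ι (α s⁻¹ (a * b)) (f s) = ι (α s⁻¹ a) (ι (α s⁻¹ b) (f s))
  rw [map_mul, map_mul]; rfl

/-- `π` as a star homomorphism. -/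
def piHom (ι : A →⋆ₙₐ[ℂ] (H →L[ℂ] H)) (α : G → A ≃⋆ₐ[ℂ] A) :
    A →⋆ₙₐ[ℂ] (lp (fun _ : G => H) 2 →L[ℂ] lp (fun _ : G => H) 2) where
  toFun := piRep ι α
  map_smul' := fun c a => (piRepLin ι α).map_smul c a
  map_zero' := (piRepLin ι α).map_zero
  map_add' := fun a b => (piRepLin ι α).map_add a b
  map_mul' := piRep_mul ι α
  map_star' := fun a => (star_piRep ι α a).symm

theorem piHom_apply (ι : A →⋆ₙₐ[ℂ] (H →L[ℂ] H)) (α : G → A ≃⋆ₐ[ℂ] A) (a : A) :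
    piHom ι α a = piRep ι α a := rfl

theorem piHom_injective (ι : A →⋆ₙₐ[ℂ] (H →L[ℂ] H)) (hι : Function.Injective ι)
    (α : G → A ≃⋆ₐ[ℂ] A) : Function.Injective (piHom ι α) := by
  intro a b h
  apply (α (1 : G)⁻¹).injective
  apply hι
  ext v
  have := congrArg (fun T => T (lpSingle (1 : G) v) (1 : G)) h
  simp only [piHom_apply, piRep_apply, lpSingle_self] at this
  exact this

theorem act_inv (α : G → A ≃⋆ₐ[ℂ] A) (hα : IsAction α) (s : G) (a : A) : α s (α s⁻¹ a) = a := by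
  rw [← hα.2, mul_inv_cancel, hα.1]

theorem act_inv2 (α : G → A ≃⋆ₐ[ℂ] A) (hα : IsAction α) (s : G) (a : A) : α s⁻¹ (α s a) = a := by
  rw [← hα.2, inv_mul_cancel, hα.1]

theorem lam_piRep (ι : A →⋆ₙₐ[ℂ] (H →L[ℂ] H)) (α : G → A ≃⋆ₐ[ℂ] A) (hα : IsAction α) (t : G)
    (a : A) : lam t * piRep ι α a = piRep ι α (α t a) * lam t := by
  refine op_ext fun f s => ?_
  change ι (α (t⁻¹ * s)⁻¹ a) (f (t⁻¹ * s)) = ι (α s⁻¹ (α t a)) (f (t⁻¹ * s))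
  rw [← hα.2, _root_.mul_inv_rev, inv_inv]

theorem gen_mul (ι : A →⋆ₙₐ[ℂ] (H →L[ℂ] H)) (α : G → A ≃⋆ₐ[ℂ] A) (hα : IsAction α) (s t : G)
    (a b : A) : (piRep ι α a * lam s) * (piRep ι α b * lam t) =
      piRep ι α (a * α s b) * lam (s * t) := by
  rw [piRep_mul, ← lam_mul, mul_assoc, ← mul_assoc (lam s), lam_piRep ι α hα]
  simp only [mul_assoc]

theorem gen_star (ι : A →⋆ₙₐ[ℂ] (H →L[ℂ] H)) (α : G → A ≃⋆ₐ[ℂ] A) (hα : IsAction α) (s : G)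
    (a : A) : star (piRep ι α a * lam s) = piRep ι α (α s⁻¹ (star a)) * lam s⁻¹ := by
  rw [star_mul, star_lam, star_piRep, lam_piRep ι α hα]

/-- The algebraic crossed product. -/
def spanAlg (ι : A →⋆ₙₐ[ℂ] (H →L[ℂ] H)) (α : G → A ≃⋆ₐ[ℂ] A) (hα : IsAction α) :
    NonUnitalStarSubalgebra ℂ (lp (fun _ : G => H) 2 →L[ℂ] lp (fun _ : G => H) 2) where
  __ := Submodule.span ℂ {x | ∃ (a : A) (t : G), x = piRep ι α a * lam t}
  mul_mem' := by
    intro x y hx hy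
    refine Submodule.span_induction₂ (p := fun x y _ _ => x * y ∈
      Submodule.span ℂ {x | ∃ (a : A) (t : G), x = piRep ι α a * lam t})
      ?_ ?_ ?_ ?_ ?_ ?_ ?_ hx hy
    · rintro _ _ ⟨a, s, rfl⟩ ⟨b, t, rfl⟩
      rw [gen_mul ι α hα]
      exact Submodule.subset_span ⟨_, _, rfl⟩
    · intro y _; rw [zero_mul]; exact Submodule.zero_mem _
    · intro y _; rw [mul_zero]; exact Submodule.zero_mem _
    · intro x y z _ _ _ h1 h2; rw [add_mul]; exact Submodule.add_mem _ h1 h2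
    · intro x y z _ _ _ h1 h2; rw [mul_add]; exact Submodule.add_mem _ h1 h2
    · intro c x y _ _ h; rw [smul_mul_assoc]; exact Submodule.smul_mem _ _ h
    · intro c x y _ _ h; rw [mul_smul_comm]; exact Submodule.smul_mem _ _ h
  star_mem' := by
    intro x hx
    refine Submodule.span_induction (p := fun x _ => star x ∈
      Submodule.span ℂ {x | ∃ (a : A) (t : G), x = piRep ι α a * lam t}) ?_ ?_ ?_ ?_ hx
    · rintro _ ⟨a, s, rfl⟩
      rw [gen_star ι α hα]
      exact Submodule.subset_span ⟨_, _, rfl⟩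
    · rw [star_zero]; exact Submodule.zero_mem _
    · intro x y _ _ h1 h2; rw [star_add]; exact Submodule.add_mem _ h1 h2
    · intro c x _ h; rw [star_smul]; exact Submodule.smul_mem _ _ h

/-- The crossed product as a C*-subalgebra. -/
def crossAlg (ι : A →⋆ₙₐ[ℂ] (H →L[ℂ] H)) (α : G → A ≃⋆ₐ[ℂ] A) (hα : IsAction α) :
    NonUnitalStarSubalgebra ℂ (lp (fun _ : G => H) 2 →L[ℂ] lp (fun _ : G => H) 2) :=
  (spanAlg ι α hα).topologicalClosure

theorem mem_crossAlg (ι : A →⋆ₙₐ[ℂ] (H →L[ℂ] H)) (α : G → A ≃⋆ₐ[ℂ] A) (hα : IsAction α)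
    (x : lp (fun _ : G => H) 2 →L[ℂ] lp (fun _ : G => H) 2) :
    x ∈ crossAlg ι α hα ↔ x ∈ CrossedSet ι α := Iff.rfl

theorem matPos_one {R : Type*} [NonUnitalSemiring R] [StarRing R] (x : R) :
    MatPos (Matrix.of fun _ _ : Fin 1 => x) ↔ ∃ y, x = star y * y := by
  constructor
  · rintro ⟨N, hN⟩
    refine ⟨N 0 0, ?_⟩
    have := congrFun (congrFun hN 0) 0
    simpa [Matrix.mul_apply] using this
  · rintro ⟨y, hy⟩
    refine ⟨Matrix.of fun _ _ => y, ?_⟩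
    ext i j
    simpa [Matrix.mul_apply] using hy

theorem pos_bounded {D E : Type*} [NonUnitalCStarAlgebra D] [NonUnitalCStarAlgebra E]
    (Ψ : D →ₗ[ℂ] E) (h : ∀ y, ∃ z, Ψ (star y * y) = star z * z) :
    ∃ C : ℝ, ∀ x, ‖Ψ x‖ ≤ C * ‖x‖ := by
  letI := CStarAlgebra.spectralOrder D
  haveI := CStarAlgebra.spectralOrderedRing D
  letI := CStarAlgebra.spectralOrder E
  haveI := CStarAlgebra.spectralOrderedRing E
  have hΨ : ∀ x, 0 ≤ x → 0 ≤ Ψ x := by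
    intro x hx
    obtain ⟨y, rfl⟩ := (CStarAlgebra.nonneg_iff_eq_star_mul_self).1 hx
    obtain ⟨z, hz⟩ := h y
    rw [hz]
    exact star_mul_self_nonneg z
  obtain ⟨C, hC⟩ := PositiveLinearMap.exists_norm_apply_le (PositiveLinearMap.mk₀ Ψ hΨ)
  exact ⟨C, fun x => hC x⟩

theorem cp_bounded (ι : A →⋆ₙₐ[ℂ] (H →L[ℂ] H)) (α : G → A ≃⋆ₐ[ℂ] A) (hα : IsAction α)
    (Φ : (lp (fun _ : G => H) 2 →L[ℂ] lp (fun _ : G => H) 2) →ₗ[ℂ]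
         (lp (fun _ : G => H) 2 →L[ℂ] lp (fun _ : G => H) 2))
    (hcp : CPOnCrossed ι α Φ) : ∃ C : ℝ, ∀ x ∈ CrossedSet ι α, ‖Φ x‖ ≤ C * ‖x‖ := by
  haveI : IsClosed (crossAlg ι α hα : Set (lp (fun _ : G => H) 2 →L[ℂ] lp (fun _ : G => H) 2)) :=
    isClosed_closure
  let Ψ : crossAlg ι α hα →ₗ[ℂ] (lp (fun _ : G => H) 2 →L[ℂ] lp (fun _ : G => H) 2) :=
    { toFun := fun x => Φ x
      map_add' := fun x y => Φ.map_add x y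
      map_smul' := fun c x => Φ.map_smul c x }
  obtain ⟨C, hC⟩ := pos_bounded Ψ (by
    intro y
    have h1 := hcp.2 1 (Matrix.of fun _ _ =>
        ((star y * y : crossAlg ι α hα) : lp (fun _ : G => H) 2 →L[ℂ] lp (fun _ : G => H) 2))
      (fun _ _ => (star y * y).2) ((matPos_one _).2 ⟨y, rfl⟩)
    exact (matPos_one _).1 h1)
  exact ⟨C, fun x hx => hC ⟨x, hx⟩⟩

end Dyn
end HS
end

noncomputable section
open scoped ComplexOrder ENNReal InnerProductSpace
open Matrix
set_option linter.all false
namespace HS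

section Dyn2
variable {H : Type*} [NormedAddCommGroup H] [InnerProductSpace ℂ H] [CompleteSpace H]
variable {A : Type*} [NonUnitalCStarAlgebra A]
variable {G : Type*} [Group G] {X : Type*}

theorem form_one (T : H →L[ℂ] H) (ξ η : Fin 1 → H) :
    form (Matrix.of fun _ _ : Fin 1 => T) ξ η = ⟪ξ 0, T (η 0)⟫_ℂ := by
  simp [form]

theorem norm_toLp_one (ξ : Fin 1 → H) : ‖WithLp.toLp 2 ξ‖ = ‖ξ 0‖ := by
  rw [← sq_eq_sq₀ (norm_nonneg _) (norm_nonneg _), norm_toLp_sq]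
  simp

theorem norm_matOp_one (T : H →L[ℂ] H) : ‖matOp (Matrix.of fun _ _ : Fin 1 => T)‖ = ‖T‖ := by
  apply le_antisymm
  · refine norm_matOp_le (norm_nonneg _) fun ξ η => ?_
    rw [form_one, norm_toLp_one, norm_toLp_one]
    refine (norm_inner_le_norm _ _).trans ?_
    have := T.le_opNorm (η 0)
    calc ‖ξ 0‖ * ‖T (η 0)‖ ≤ ‖ξ 0‖ * (‖T‖ * ‖η 0‖) := by gcongr
      _ = _ := by ring
  · refine ContinuousLinearMap.opNorm_le_bound _ (norm_nonneg _) fun v => ?_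
    have h := norm_form_le (Matrix.of fun _ _ : Fin 1 => T) (fun _ => T v) (fun _ => v)
    rw [form_one, norm_toLp_one, norm_toLp_one] at h
    simp only [inner_self_eq_norm_sq_to_K, norm_pow] at h
    simp only [Complex.coe_algebraMap, Complex.norm_real, norm_norm] at h
    rcases (norm_nonneg (T v)).eq_or_lt with h0 | h0
    · rw [← h0]; positivity
    · refine le_of_mul_le_mul_left ?_ h0
      nlinarith

theorem cb_bound_apply (ι : A →⋆ₙₐ[ℂ] (H →L[ℂ] H)) (hisom : ∀ a : A, ‖ι a‖ = ‖a‖)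
    {f : A →ₗ[ℂ] A} {C : ℝ} (h : CBBound (fun a => ι a) (fun a => ι a) f C) (a : A) :
    ‖f a‖ ≤ C * ‖a‖ := by
  have h1 := h 1 (Matrix.of fun _ _ => a)
  have h2 : (Matrix.of fun _ _ : Fin 1 => a).map (fun a => ι (f a)) = Matrix.of fun _ _ => ι (f a) := rfl
  have h3 : (Matrix.of fun _ _ : Fin 1 => a).map (fun a => ι a) = Matrix.of fun _ _ => ι a := rfl
  rw [h2, h3, norm_matOp_one, norm_matOp_one, hisom, hisom] at h1
  exact h1

theorem NF_apply (α : G → A ≃⋆ₐ[ℂ] A) (F : G → (A →ₗ[ℂ] A)) (s t : G) (a : A) :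
    NF α F s t a = α s⁻¹ (F (s * t⁻¹) (α s a)) := rfl

theorem NF_diag (α : G → A ≃⋆ₐ[ℂ] A) (F : G → (A →ₗ[ℂ] A)) {C : ℝ}
    (h : ∀ a, ‖F 1 a‖ ≤ C * ‖a‖) (s : G) (a : A) : ‖NF α F s s a‖ ≤ C * ‖a‖ := by
  rw [NF_apply, mul_inv_cancel, StarAlgEquiv.norm_map, ← StarAlgEquiv.norm_map (α s) a]
  exact h _

theorem NF_cont (α : G → A ≃⋆ₐ[ℂ] A) (F : G → (A →ₗ[ℂ] A)) {C : ℝ}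
    (h : ∀ s a, ‖F s a‖ ≤ C * ‖a‖) (s t : G) : Continuous (NF α F s t) := by
  refine AddMonoidHomClass.continuous_of_bound _ C fun a => ?_
  rw [NF_apply, StarAlgEquiv.norm_map]
  exact (h _ _).trans_eq (by rw [StarAlgEquiv.norm_map])

theorem rel_gen (ι : A →⋆ₙₐ[ℂ] (H →L[ℂ] H)) (α : G → A ≃⋆ₐ[ℂ] A) (hα : IsAction α)
    (F : G → (A →ₗ[ℂ] A)) (a : A) (t : G) :
    Rel ι (NF α F) (piRep ι α a * lam t) (piRep ι α (F t a) * lam t) := by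
  intro s r
  have key : ∀ b : A, ∀ v : H, entry s r (piRep ι α b * lam t) v =
      ι (α s⁻¹ b) ((lpSingle r v : lp (fun _ : G => H) 2) (t⁻¹ * s)) := fun _ _ => rfl
  by_cases hr : t⁻¹ * s = r
  · refine ⟨α s⁻¹ a, ?_, ?_⟩
    · ext v
      rw [key, hr, lpSingle_self]
    · ext v
      have ht : s * r⁻¹ = t := by rw [← hr]; group
      rw [key, NF_apply, act_inv α hα, ht, hr, lpSingle_self]
  · refine ⟨0, ?_, ?_⟩
    · ext v
      rw [key, lpSingle_ne hr]
      simp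
    · ext v
      rw [key, lpSingle_ne hr]
      simp

/-- The relation as a submodule. -/
def relSub (ι : A →⋆ₙₐ[ℂ] (H →L[ℂ] H)) (φ : X → X → (A →ₗ[ℂ] A)) :
    Submodule ℂ ((lp (fun _ : X => H) 2 →L[ℂ] lp (fun _ : X => H) 2) ×
      (lp (fun _ : X => H) 2 →L[ℂ] lp (fun _ : X => H) 2)) where
  carrier := {z | Rel ι φ z.1 z.2}
  zero_mem' := fun s r => ⟨0, by simp [entry], by simp [entry]⟩
  add_mem' := by
    intro z w hz hw s r
    obtain ⟨a, h1, h2⟩ := hz s r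
    obtain ⟨b, h3, h4⟩ := hw s r
    refine ⟨a + b, ?_, ?_⟩
    · rw [map_add, ← h1, ← h3]; simp [entry]
    · rw [map_add, map_add, ← h2, ← h4]; simp [entry]
  smul_mem' := by
    intro c z hz s r
    obtain ⟨a, h1, h2⟩ := hz s r
    refine ⟨c • a, ?_, ?_⟩
    · rw [map_smul, ← h1]; simp [entry]
    · rw [map_smul, map_smul, ← h2]; simp [entry]

theorem mem_relSub (ι : A →⋆ₙₐ[ℂ] (H →L[ℂ] H)) (φ : X → X → (A →ₗ[ℂ] A))
    (x y : lp (fun _ : X => H) 2 →L[ℂ] lp (fun _ : X => H) 2) :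
    (x, y) ∈ relSub ι φ ↔ Rel ι φ x y := Iff.rfl

theorem isClosed_relSub (ι : A →⋆ₙₐ[ℂ] (H →L[ℂ] H)) (hisom : ∀ a : A, ‖ι a‖ = ‖a‖)
    {φ : X → X → (A →ₗ[ℂ] A)} (hcont : ∀ s t, Continuous (φ s t)) :
    IsClosed (relSub ι φ : Set ((lp (fun _ : X => H) 2 →L[ℂ] lp (fun _ : X => H) 2) ×
      (lp (fun _ : X => H) 2 →L[ℂ] lp (fun _ : X => H) 2))) := by
  have hιc : Continuous (iotaLin ι) :=
    AddMonoidHomClass.continuous_of_bound _ 1 fun a => by rw [one_mul]; exact (hisom a).le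
  let I : A →L[ℂ] (H →L[ℂ] H) := ⟨iotaLin ι, hιc⟩
  let P : X → X → (A →L[ℂ] A) := fun s r => ⟨φ s r, hcont s r⟩
  let L : X → X → (A →L[ℂ] ((H →L[ℂ] H) × (H →L[ℂ] H))) := fun s r => I.prod (I ∘L P s r)
  have hL : ∀ s r, IsClosed (Set.range (L s r)) := by
    intro s r
    refine AntilipschitzWith.isClosed_range (K := 1) ?_ (L s r).uniformContinuous
    refine AddMonoidHomClass.antilipschitz_of_bound _ fun a => ?_
    rw [NNReal.coe_one, one_mul, ← hisom a]
    exact norm_fst_le (L s r a)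
  have : (relSub ι φ : Set ((lp (fun _ : X => H) 2 →L[ℂ] lp (fun _ : X => H) 2) ×
      (lp (fun _ : X => H) 2 →L[ℂ] lp (fun _ : X => H) 2))) =
      ⋂ s, ⋂ r, (fun z => (entry s r z.1, entry s r z.2)) ⁻¹' Set.range (L s r) := by
    ext z
    simp only [Set.mem_iInter, Set.mem_preimage, Set.mem_range]
    refine forall_congr' fun s => forall_congr' fun r => exists_congr fun a => ?_
    constructor
    · rintro ⟨h1, h2⟩; exact Prod.ext h1.symm h2.symm
    · intro h; exact ⟨(congrArg Prod.fst h).symm, (congrArg Prod.snd h).symm⟩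
  rw [this]
  refine isClosed_iInter fun s => isClosed_iInter fun r => (hL s r).preimage ?_
  have he : Continuous (entry (H := H) s r) :=
    continuous_const.clm_comp (continuous_id.clm_comp continuous_const)
  exact (he.comp continuous_fst).prodMk (he.comp continuous_snd)

theorem continuousOn_of_bound (ι : A →⋆ₙₐ[ℂ] (H →L[ℂ] H)) (α : G → A ≃⋆ₐ[ℂ] A) (hα : IsAction α)
    (Φ : (lp (fun _ : G => H) 2 →L[ℂ] lp (fun _ : G => H) 2) →ₗ[ℂ]
         (lp (fun _ : G => H) 2 →L[ℂ] lp (fun _ : G => H) 2)) {C : ℝ}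
    (hC : ∀ x ∈ CrossedSet ι α, ‖Φ x‖ ≤ C * ‖x‖) : ContinuousOn Φ (CrossedSet ι α) := by
  refine LipschitzOnWith.continuousOn (K := C.toNNReal) ?_
  refine LipschitzOnWith.of_dist_le_mul fun x hx y hy => ?_
  rw [dist_eq_norm, dist_eq_norm, ← map_sub]
  refine (hC _ ((crossAlg ι α hα).sub_mem hx hy)).trans ?_
  gcongr
  exact Real.le_coe_toNNReal C

theorem rel_of_bound (ι : A →⋆ₙₐ[ℂ] (H →L[ℂ] H)) (hisom : ∀ a : A, ‖ι a‖ = ‖a‖)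
    (α : G → A ≃⋆ₐ[ℂ] A) (hα : IsAction α) (F : G → (A →ₗ[ℂ] A))
    (hcont : ∀ s t, Continuous (NF α F s t))
    (Φ : (lp (fun _ : G => H) 2 →L[ℂ] lp (fun _ : G => H) 2) →ₗ[ℂ]
         (lp (fun _ : G => H) 2 →L[ℂ] lp (fun _ : G => H) 2)) {C : ℝ}
    (hgen : HSGenProp ι α F Φ)
    (hC : ∀ x ∈ CrossedSet ι α, ‖Φ x‖ ≤ C * ‖x‖) :
    ∀ x ∈ CrossedSet ι α, Rel ι (NF α F) x (Φ x) := by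
  have h1 : Set.MapsTo (fun x => (x, Φ x)) (Submodule.span ℂ
      {x | ∃ (a : A) (t : G), x = piRep ι α a * lam t} : Set _) (relSub ι (NF α F) : Set _) := by
    intro x hx
    have : (Submodule.span ℂ {x | ∃ (a : A) (t : G), x = piRep ι α a * lam t}) ≤
        (relSub ι (NF α F)).comap (LinearMap.id.prod Φ) := by
      rw [Submodule.span_le]
      rintro _ ⟨a, t, rfl⟩
      change Rel ι (NF α F) _ (Φ _)
      rw [hgen]
      exact rel_gen ι α hα F a t
    exact this hx
  have h2 := h1.closure_of_continuousOn
    (continuousOn_id.prodMk (continuousOn_of_bound ι α hα Φ hC))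
  rw [(isClosed_relSub ι hisom hcont).closure_eq] at h2
  exact fun x hx => h2 hx

theorem rel_norm_one (ι : A →⋆ₙₐ[ℂ] (H →L[ℂ] H)) (hisom : ∀ a : A, ‖ι a‖ = ‖a‖)
    {φ : X → X → (A →ₗ[ℂ] A)} (hφ : PositiveTypeA φ) {C : ℝ} (hC0 : 0 ≤ C)
    (hC : ∀ s a, ‖φ s s a‖ ≤ C * ‖a‖) (hcont : ∀ s t, Continuous (φ s t))
    {x y : lp (fun _ : X => H) 2 →L[ℂ] lp (fun _ : X => H) 2}
    (h : Rel ι φ x y) : ‖y‖ ≤ C * ‖x‖ := by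
  have := rel_norm (ν := Fin 1) ι hisom hφ hC0 hC hcont (M := Matrix.of fun _ _ => x)
    (Y := Matrix.of fun _ _ => y) (fun _ _ => h)
  rwa [norm_matOp_one, norm_matOp_one] at this

theorem exists_map (ι : A →⋆ₙₐ[ℂ] (H →L[ℂ] H)) (hisom : ∀ a : A, ‖ι a‖ = ‖a‖)
    (α : G → A ≃⋆ₐ[ℂ] A) (hα : IsAction α) (F : G → (A →ₗ[ℂ] A))
    (hφ : PositiveTypeA (NF α F)) {C : ℝ} (hC0 : 0 ≤ C)
    (hC : ∀ s a, ‖NF α F s s a‖ ≤ C * ‖a‖) (hcont : ∀ s t, Continuous (NF α F s t)) :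
    ∃ Φ : (lp (fun _ : G => H) 2 →L[ℂ] lp (fun _ : G => H) 2) →ₗ[ℂ]
         (lp (fun _ : G => H) 2 →L[ℂ] lp (fun _ : G => H) 2), HSGenProp ι α F Φ ∧
      (∀ x ∈ CrossedSet ι α, Rel ι (NF α F) x (Φ x)) := by
  set g := relSub ι (NF α F) with hg
  have hb : ∀ x y, (x, y) ∈ g → ‖y‖ ≤ C * ‖x‖ := fun x y h =>
    rel_norm_one ι hisom hφ hC0 hC hcont h
  have hg0 : ∀ z ∈ g, z.1 = 0 → z.2 = 0 := by
    intro z hz h0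
    have := hb z.1 z.2 hz
    rw [h0, norm_zero, mul_zero] at this
    exact norm_le_zero_iff.1 this
  obtain ⟨Φ, hΦ⟩ := LinearMap.exists_extend (g.toLinearPMap).toFun
  have hΦ1 : ∀ x y, (x, y) ∈ g → Φ x = y := by
    intro x y hxy
    have hx : x ∈ g.toLinearPMap.domain := ⟨(x, y), hxy, rfl⟩
    have h1 : Φ x = g.toLinearPMap ⟨x, hx⟩ := congrArg (fun f => f ⟨x, hx⟩) hΦ
    have h2 := Submodule.mem_graph_toLinearPMap hg0 ⟨x, hx⟩
    have h3 := hg0 _ (g.sub_mem h2 hxy) (sub_self _)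
    rw [h1]
    exact sub_eq_zero.1 h3
  have hcl : IsClosed (g : Set ((lp (fun _ : G => H) 2 →L[ℂ] lp (fun _ : G => H) 2) ×
      (lp (fun _ : G => H) 2 →L[ℂ] lp (fun _ : G => H) 2))) := isClosed_relSub ι hisom hcont
  haveI : CompleteSpace g := hcl.completeSpace_coe
  let f : g →L[ℂ] (lp (fun _ : G => H) 2 →L[ℂ] lp (fun _ : G => H) 2) :=
    (ContinuousLinearMap.fst ℂ _ _) ∘L g.subtypeL
  have hf : IsClosed (Set.range f) := by
    refine AntilipschitzWith.isClosed_range (K := (max 1 C).toNNReal) ?_ f.uniformContinuous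
    refine AddMonoidHomClass.antilipschitz_of_bound _ fun z => ?_
    rw [Real.coe_toNNReal _ (by positivity)]
    have h1 := hb z.1.1 z.1.2 z.2
    change max ‖z.1.1‖ ‖z.1.2‖ ≤ max 1 C * ‖z.1.1‖
    refine max_le ?_ (h1.trans ?_)
    · exact le_mul_of_one_le_left (norm_nonneg _) (le_max_left _ _)
    · gcongr; exact le_max_right _ _
  refine ⟨Φ, fun a s => hΦ1 _ _ (rel_gen ι α hα F a s), ?_⟩
  have hsub : CrossedSet ι α ⊆ Set.range f := by
    refine closure_minimal ?_ hf
    have : (Submodule.span ℂ {x | ∃ (a : A) (t : G), x = piRep ι α a * lam t}) ≤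
        LinearMap.range f.toLinearMap := by
      rw [Submodule.span_le]
      rintro _ ⟨a, t, rfl⟩
      exact ⟨⟨(_, piRep ι α (F t a) * lam t), rel_gen ι α hα F a t⟩, rfl⟩
    exact this
  intro x hx
  obtain ⟨⟨⟨x', y⟩, hz⟩, rfl⟩ := hsub hx
  change Rel ι (NF α F) x' (Φ x')
  rw [hΦ1 _ _ hz]
  exact hz

theorem maps_crossed (ι : A →⋆ₙₐ[ℂ] (H →L[ℂ] H)) 
    (α : G → A ≃⋆ₐ[ℂ] A) (hα : IsAction α) (F : G → (A →ₗ[ℂ] A))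
    (Φ : (lp (fun _ : G => H) 2 →L[ℂ] lp (fun _ : G => H) 2) →ₗ[ℂ]
         (lp (fun _ : G => H) 2 →L[ℂ] lp (fun _ : G => H) 2)) {C : ℝ}
    (hgen : HSGenProp ι α F Φ)
    (hC : ∀ x ∈ CrossedSet ι α, ‖Φ x‖ ≤ C * ‖x‖) :
    ∀ x ∈ CrossedSet ι α, Φ x ∈ CrossedSet ι α := by
  have h1 : Set.MapsTo Φ (Submodule.span ℂ
      {x | ∃ (a : A) (t : G), x = piRep ι α a * lam t} : Set _) (Submodule.span ℂ
      {x | ∃ (a : A) (t : G), x = piRep ι α a * lam t} : Set _) := by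
    intro x hx
    have : (Submodule.span ℂ {x | ∃ (a : A) (t : G), x = piRep ι α a * lam t}) ≤
        (Submodule.span ℂ {x | ∃ (a : A) (t : G), x = piRep ι α a * lam t}).comap Φ := by
      rw [Submodule.span_le]
      rintro _ ⟨a, t, rfl⟩
      change Φ _ ∈ Submodule.span ℂ _
      rw [hgen]
      exact Submodule.subset_span ⟨_, _, rfl⟩
    exact this hx
  exact fun x hx => h1.closure_of_continuousOn (continuousOn_of_bound ι α hα Φ hC) hx

theorem gen_mem (ι : A →⋆ₙₐ[ℂ] (H →L[ℂ] H)) (α : G → A ≃⋆ₐ[ℂ] A) (a : A) (t : G) :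
    piRep ι α a * lam t ∈ CrossedSet ι α :=
  subset_closure (Submodule.subset_span ⟨a, t, rfl⟩)

theorem posType_of_cp (ι : A →⋆ₙₐ[ℂ] (H →L[ℂ] H)) (hι : Function.Injective ι)
    (α : G → A ≃⋆ₐ[ℂ] A) (hα : IsAction α) (F : G → (A →ₗ[ℂ] A))
    (Φ : (lp (fun _ : G => H) 2 →L[ℂ] lp (fun _ : G => H) 2) →ₗ[ℂ]
         (lp (fun _ : G => H) 2 →L[ℂ] lp (fun _ : G => H) 2))
    (hgen : HSGenProp ι α F Φ) (hcp : CPOnCrossed ι α Φ) : PositiveTypeA (NF α F) := by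
  intro m x a ha
  rw [matPos_iff ι hι]
  let Y : Matrix (Fin m) (Fin m) (lp (fun _ : G => H) 2 →L[ℂ] lp (fun _ : G => H) 2) :=
    Matrix.of fun p q => piRep ι α (α (x p) (a p q)) * lam (x p * (x q)⁻¹)
  have hY : ∀ p q, Y p q = lam (x p) * (piRep ι α (a p q) * lam (x q)⁻¹) := by
    intro p q
    rw [← mul_assoc, lam_piRep ι α hα, mul_assoc, lam_mul]; rfl
  have hpos : QPos Y := by
    intro ξ
    have h1 := (matPos_iff (piHom ι α) (piHom_injective ι hι α) a).1 ha
      (fun p => lam (x p)⁻¹ (ξ p))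
    convert h1 using 1
    refine Finset.sum_congr rfl fun p _ => Finset.sum_congr rfl fun q _ => ?_
    rw [hY]
    exact lam_inner _ _ _
  have h2 := (matPos_op_iff _).1 (hcp.2 m Y (fun p q => gen_mem ι α _ _) ((matPos_op_iff _).2 hpos))
  intro v
  have h3 := h2 fun p => lpSingle (x p) (v p)
  convert h3 using 1
  refine Finset.sum_congr rfl fun p _ => Finset.sum_congr rfl fun q _ => ?_
  rw [inner_lpSingle]
  have h4 : (Y.map Φ) p q = piRep ι α (F (x p * (x q)⁻¹) (α (x p) (a p q))) * lam (x p * (x q)⁻¹) :=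
    hgen _ _
  rw [h4]
  change _ = ⟪v p, ι (NF α F (x p) (x q) (a p q))
    ((lpSingle (x q) (v q) : lp (fun _ : G => H) 2) ((x p * (x q)⁻¹)⁻¹ * x p))⟫_ℂ
  have h5 : (x p * (x q)⁻¹)⁻¹ * x p = x q := by group
  rw [h5, lpSingle_self]
  rfl

theorem TOp_single {k : X × X → (H →L[ℂ] H)} (p : X × X) (h : ∀ q, q ≠ p → k q = 0) :
    TOp k = elemOp p.1 p.2 (k p) := by
  rw [TOp]
  refine finsum_eq_single _ p fun q hq => ?_
  rw [h q hq]; simp [elemOp]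

theorem inner_lpSingle_right (x : X) (v : H) (f : lp (fun _ : X => H) 2) :
    ⟪f, lpSingle x v⟫_ℂ = ⟪f x, v⟫_ℂ := by
  rw [← inner_conj_symm, inner_lpSingle, inner_conj_symm]

theorem form_elem {ν : Type*} [Fintype ν] (x : ν → X) (T : Matrix ν ν (H →L[ℂ] H))
    (ξ η : ν → lp (fun _ : X => H) 2) :
    form (Matrix.of fun i j => elemOp (x i) (x j) (T i j)) ξ η =
      form T (fun i => ξ i (x i)) (fun i => η i (x i)) := by
  refine Finset.sum_congr rfl fun p _ => Finset.sum_congr rfl fun q _ => ?_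
  change ⟪ξ p, lpSingle (x p) (T p q (η q (x q)))⟫_ℂ = _
  rw [inner_lpSingle_right]

theorem norm_lpSingle (x : X) (v : H) : ‖(lpSingle x v : lp (fun _ : X => H) 2)‖ = ‖v‖ := by
  have : ⟪(lpSingle x v : lp (fun _ : X => H) 2), lpSingle x v⟫_ℂ = ⟪v, v⟫_ℂ := by
    rw [inner_lpSingle, lpSingle_self]
  simp only [inner_self_eq_norm_sq_to_K] at this
  have h : ‖(lpSingle x v : lp (fun _ : X => H) 2)‖ ^ 2 = ‖v‖ ^ 2 := by exact_mod_cast this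
  exact (sq_eq_sq₀ (norm_nonneg _) (norm_nonneg _)).1 h

theorem norm_elem {ν : Type*} [Fintype ν] (x : ν → X) (T : Matrix ν ν (H →L[ℂ] H)) :
    ‖matOp (Matrix.of fun i j => elemOp (x i) (x j) (T i j))‖ = ‖matOp T‖ := by
  apply le_antisymm
  · refine norm_matOp_le (norm_nonneg _) fun ξ η => ?_
    rw [form_elem]
    have h : ∀ ξ : ν → lp (fun _ : X => H) 2,
        ‖WithLp.toLp 2 (fun i => ξ i (x i))‖ ≤ ‖WithLp.toLp 2 ξ‖ := by
      intro ξ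
      rw [← sq_le_sq₀ (norm_nonneg _) (norm_nonneg _), norm_toLp_sq, norm_toLp_sq]
      gcongr with i
      exact lp.norm_apply_le_norm (by norm_num) _ _
    refine (norm_form_le _ _ _).trans ?_
    gcongr
    · exact h ξ
    · exact h η
  · refine norm_matOp_le (norm_nonneg _) fun ξ η => ?_
    have h := norm_form_le (Matrix.of fun i j => elemOp (x i) (x j) (T i j))
      (fun i => lpSingle (x i) (ξ i)) (fun i => lpSingle (x i) (η i))
    rw [form_elem] at h
    have h2 : ∀ ξ : ν → H, ‖WithLp.toLp 2 (fun i => (lpSingle (x i) (ξ i) : lp (fun _ : X => H) 2))‖ =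
        ‖WithLp.toLp 2 ξ‖ := by
      intro ξ
      rw [← sq_eq_sq₀ (norm_nonneg _) (norm_nonneg _), norm_toLp_sq, norm_toLp_sq]
      simp only [norm_lpSingle]
    simp only [lpSingle_self, h2] at h
    exact h

/-- Kernel supported at a single point. -/
def sk (p : X × X) (a : A) : X × X → A := by
  classical
  exact fun q => if q = p then a else 0

theorem sk_self (p : X × X) (a : A) : sk p a p = a := by
  classical
  exact if_pos rfl

theorem sk_ne {p q : X × X} (h : q ≠ p) (a : A) : sk p a q = 0 := by
  classical
  exact if_neg h

theorem sk_fin (p : X × X) (a : A) : (Function.support (sk p a)).Finite := by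
  refine (Set.finite_singleton p).subset fun q hq => ?_
  by_contra h
  exact hq (sk_ne h a)

theorem TKer_sk (ι : A →⋆ₙₐ[ℂ] (H →L[ℂ] H)) (p : X × X) (a : A) :
    TKer ι (sk p a) = elemOp p.1 p.2 (ι a) := by
  rw [TKer, TOp_single p fun q hq => by rw [sk_ne hq, map_zero], sk_self]

theorem TOp_sk (ψ : X → X → (A →ₗ[ℂ] (H →L[ℂ] H))) (p : X × X) (a : A) :
    TOp (fun q => ψ q.1 q.2 (sk p a q)) = elemOp p.1 p.2 (ψ p.1 p.2 a) := by
  rw [TOp_single p fun q hq => by rw [sk_ne hq, map_zero], sk_self]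

theorem posType_of_schurCP (ι : A →⋆ₙₐ[ℂ] (H →L[ℂ] H)) (hι : Function.Injective ι)
    (φ : X → X → (A →ₗ[ℂ] A)) (h : SchurCP ι (fun s t => iotaLin ι ∘ₗ φ s t)) :
    PositiveTypeA φ := by
  intro m x a ha
  rw [matPos_iff ι hι] at ha ⊢
  have h1 := h m (fun i j => sk (x i, x j) (a i j)) (fun i j => sk_fin _ _) (by
    rw [matPos_op_iff]
    simp only [TKer_sk]
    intro ξ
    rw [form_elem x (fun i j => ι (a i j))]
    exact ha _)
  have e : ∀ i j, TOp (fun p => (iotaLin ι ∘ₗ φ p.1 p.2) (sk (x i, x j) (a i j) p)) =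
      elemOp (x i) (x j) (ι (φ (x i) (x j) (a i j))) := fun i j =>
    TOp_sk (fun s t => iotaLin ι ∘ₗ φ s t) (x i, x j) (a i j)
  rw [matPos_op_iff] at h1
  simp only [e] at h1
  intro v
  have h2 := h1 fun i => lpSingle (x i) (v i)
  rw [form_elem x (fun i j => ι (φ (x i) (x j) (a i j)))] at h2
  simp only [lpSingle_self] at h2
  exact h2

theorem cb_of_schurBound (ι : A →⋆ₙₐ[ℂ] (H →L[ℂ] H))
    (φ : X → X → (A →ₗ[ℂ] A)) {C : ℝ} (h : SchurBound ι (fun s t => iotaLin ι ∘ₗ φ s t) C)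
    (s : X) : CBBound (fun a => ι a) (fun a => ι a) (φ s s) C := by
  intro n M
  have h1 := h n (fun i j => sk (s, s) (M i j)) (fun i j => sk_fin _ _)
  have e : ∀ i j, TOp (fun p => (iotaLin ι ∘ₗ φ p.1 p.2) (sk (s, s) (M i j) p)) =
      elemOp s s (ι (φ s s (M i j))) := fun i j =>
    TOp_sk (fun s t => iotaLin ι ∘ₗ φ s t) (s, s) (M i j)
  simp only [e, TKer_sk] at h1
  rw [norm_elem (fun _ => s) (fun i j => ι (φ s s (M i j))),
    norm_elem (fun _ => s) (fun i j => ι (M i j))] at h1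
  exact h1

theorem cb_of_crossed (ι : A →⋆ₙₐ[ℂ] (H →L[ℂ] H)) (hι : Function.Injective ι)
    (α : G → A ≃⋆ₐ[ℂ] A) (F : G → (A →ₗ[ℂ] A))
    (Φ : (lp (fun _ : G => H) 2 →L[ℂ] lp (fun _ : G => H) 2) →ₗ[ℂ]
         (lp (fun _ : G => H) 2 →L[ℂ] lp (fun _ : G => H) 2))
    (hgen : HSGenProp ι α F Φ) {C : ℝ} (h : CBBoundOnCrossed ι α Φ C) :
    CBBound (fun a => ι a) (fun a => ι a) (F 1) C := by
  intro n M
  have h1 := h n (M.map (piHom ι α)) (fun i j => by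
    have := gen_mem ι α (M i j) 1
    rwa [lam_one, mul_one] at this)
  have h2 : (M.map (piHom ι α)).map Φ = (M.map (F 1)).map (piHom ι α) := by
    refine Matrix.ext fun i j => ?_
    have := hgen (M i j) 1
    rwa [lam_one, mul_one, mul_one] at this
  rw [h2, ← norm_matOp_map2 ι (piHom ι α) hι (piHom_injective ι hι α),
    ← norm_matOp_map2 ι (piHom ι α) hι (piHom_injective ι hι α)] at h1
  exact h1

theorem main
    (ι : A →⋆ₙₐ[ℂ] (H →L[ℂ] H)) (hisom : ∀ a : A, ‖ι a‖ = ‖a‖)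
    (α : G → A ≃⋆ₐ[ℂ] A) (hα : IsAction α)
    (F : G → (A →ₗ[ℂ] A))
    (hbdd : ∃ C : ℝ, 0 ≤ C ∧ ∀ s : G, CBBound (fun a => ι a) (fun a => ι a) (F s) C) :
    (IsHerzSchurMultiplierCP ι α F ↔ PositiveTypeA (NF α F)) ∧
    (PositiveTypeA (NF α F) ↔
      (IsSchurMultiplier ι (fun s t : G => iotaLin ι ∘ₗ NF α F s t) ∧
        SchurCP ι (fun s t : G => iotaLin ι ∘ₗ NF α F s t))) ∧
    (IsHerzSchurMultiplierCP ι α F →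
      ∀ Φ, HSGenProp ι α F Φ → CPOnCrossed ι α Φ →
        cbNormOnCrossed ι α Φ = cbNorm (fun a => ι a) (fun a => ι a) (F 1) ∧
        schurNorm ι (fun s t : G => iotaLin ι ∘ₗ NF α F s t)
          = cbNorm (fun a => ι a) (fun a => ι a) (F 1)) := by
  obtain ⟨C, hC0, hC⟩ := hbdd
  have hι : Function.Injective ι := by
    refine (injective_iff_map_eq_zero ι).2 fun a ha => ?_
    rw [← norm_eq_zero, ← hisom, ha, norm_zero]
  have hcont := NF_cont α F fun s => cb_bound_apply ι hisom (hC s)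
  have hdiag : ∀ {D : ℝ}, CBBound (fun a => ι a) (fun a => ι a) (F 1) D →
      ∀ s a, ‖NF α F s s a‖ ≤ D * ‖a‖ := fun h =>
    NF_diag α F (cb_bound_apply ι hisom h)
  have hschur : PositiveTypeA (NF α F) → ∀ {D : ℝ}, 0 ≤ D →
      CBBound (fun a => ι a) (fun a => ι a) (F 1) D →
      SchurBound ι (fun s t : G => iotaLin ι ∘ₗ NF α F s t) D := by
    intro hφ D hD0 hD n k hk
    exact rel_norm ι hisom hφ hD0 (hdiag hD) hcont fun i j => rel_TKer ι (NF α F) (hk i j)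
  refine ⟨⟨?_, ?_⟩, ⟨?_, ?_⟩, ?_⟩
  · rintro ⟨Φ, hgen, hcp, -⟩
    exact posType_of_cp ι hι α hα F Φ hgen hcp
  · intro hφ
    obtain ⟨Φ, hgen, hrel⟩ := exists_map ι hisom α hα F hφ hC0 (hdiag (hC 1)) hcont
    refine ⟨Φ, hgen, ⟨?_, ?_⟩, C, hC0, ?_⟩
    · exact maps_crossed ι α hα F Φ hgen fun x hx =>
        rel_norm_one ι hisom hφ hC0 (hdiag (hC 1)) hcont (hrel x hx)
    · intro n M hM hpos
      rw [matPos_op_iff] at hpos ⊢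
      exact rel_pos ι hι hφ (fun i j => hrel _ (hM i j)) hpos
    · intro n M hM
      exact rel_norm ι hisom hφ hC0 (hdiag (hC 1)) hcont fun i j => hrel _ (hM i j)
  · intro hφ
    refine ⟨⟨C, hC0, hschur hφ hC0 (hC 1)⟩, ?_⟩
    intro n k hk hpos
    rw [matPos_op_iff] at hpos ⊢
    exact rel_pos ι hι hφ (fun i j => rel_TKer ι (NF α F) (hk i j)) hpos
  · rintro ⟨-, h⟩
    exact posType_of_schurCP ι hι _ h
  · intro _ Φ hgen hcp
    have hφ := posType_of_cp ι hι α hα F Φ hgen hcp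
    obtain ⟨K, hK⟩ := cp_bounded ι α hα Φ hcp
    have hrel := rel_of_bound ι hisom α hα F hcont Φ hgen hK
    constructor
    · unfold cbNormOnCrossed cbNorm
      congr 1
      ext D
      refine and_congr_right fun hD0 => ⟨cb_of_crossed ι hι α F Φ hgen, fun hD n M hM => ?_⟩
      exact rel_norm ι hisom hφ hD0 (hdiag hD) hcont fun i j => hrel _ (hM i j)
    · unfold schurNorm cbNorm
      congr 1
      ext D
      refine and_congr_right fun hD0 => ⟨fun h => ?_, hschur hφ hD0⟩
      have h1 := cb_of_schurBound ι _ h (1 : G)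
      have h2 : NF α F 1 1 = F 1 := by
        ext a
        rw [NF_apply, inv_one, mul_one, hα.1, hα.1]
      rwa [h2] at h1

end Dyn2
end HS
end


noncomputable section
open scoped ComplexOrder ENNReal
open Matrix

/-- **Theorem 2.8.** Let `(A,G,α)` be a C*-dynamical system with `G` discrete and
`F : G → CB(A)` a bounded function.  The following are equivalent: (i) `F` is a
completely positive Herz-Schur `(A,G,α)`-multiplier; (ii) `N(F)` is of positive type;
(iii) `N(F)` is a Schur `A`-multiplier and `S_{N(F)}` is completely positive.
Moreover, if (i) holds then `‖S_F‖_cb = ‖S_{N(F)}‖_cb = ‖F(e)‖_cb`. -/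
theorem herzSchurCP_tfae
    {H : Type*} [NormedAddCommGroup H] [InnerProductSpace ℂ H] [CompleteSpace H]
    {A : Type*} [NonUnitalCStarAlgebra A] {G : Type*} [Group G]
    (ι : A →⋆ₙₐ[ℂ] (H →L[ℂ] H)) (hisom : ∀ a : A, ‖ι a‖ = ‖a‖)
    (hnd : NondegenerateRep ι)
    (α : G → A ≃⋆ₐ[ℂ] A) (hα : IsAction α)
    (F : G → (A →ₗ[ℂ] A))
    (hbdd : ∃ C : ℝ, 0 ≤ C ∧ ∀ s : G, CBBound (fun a => ι a) (fun a => ι a) (F s) C) :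
    (IsHerzSchurMultiplierCP ι α F ↔ PositiveTypeA (NF α F)) ∧
    (PositiveTypeA (NF α F) ↔
      (IsSchurMultiplier ι (fun s t : G => iotaLin ι ∘ₗ NF α F s t) ∧
        SchurCP ι (fun s t : G => iotaLin ι ∘ₗ NF α F s t))) ∧
    (IsHerzSchurMultiplierCP ι α F →
      ∀ Φ, HSGenProp ι α F Φ → CPOnCrossed ι α Φ →
        cbNormOnCrossed ι α Φ = cbNorm (fun a => ι a) (fun a => ι a) (F 1) ∧
        schurNorm ι (fun s t : G => iotaLin ι ∘ₗ NF α F s t)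
          = cbNorm (fun a => ι a) (fun a => ι a) (F 1)) := by
  exact HS.main ι hisom α hα F hbdd

end
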